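/- Let 𝒫 denote the class of all log-concave real random variables with 0 < ‖X‖_q < ∞. For all real p > q > 0, the supremum of ‖X‖_p/‖X‖_q over X ∈ 𝒫 is attained by a shifted exponential distribution: there exists a ∈ ℝ such that sup_{X ∈ 𝒫} ‖X‖_p/‖X‖_q = ‖E + a‖_p/‖E + a‖_q, where E has the exponential distribution with parameter 1. -/

import Mathlib

open MeasureTheory

/-- A real random variable (given by its distribution `μ`) is log-concave if it is
a.s. constant or has a density `f` w.r.t. Lebesgue measure satisfying
`f x ^ l * f y ^ (1 - l) ≤ f (l * x + (1 - l) * y)` for all `x y` and `l ∈ [0, 1]`. -/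
def IsLogConcave (μ : Measure ℝ) : Prop :=
  IsProbabilityMeasure μ ∧
  ((∃ c : ℝ, μ = Measure.dirac c) ∨
   ∃ f : ℝ → ℝ, (∀ x, 0 ≤ f x) ∧
     μ = volume.withDensity (fun x => ENNReal.ofReal (f x)) ∧
     ∀ x y l : ℝ, 0 ≤ l → l ≤ 1 → f x ^ l * f y ^ (1 - l) ≤ f (l * x + (1 - l) * y))

/-- The `s`-th moment norm `‖X‖ₛ = (E|X|^s)^(1/s)` of a random variable with
distribution `μ`. -/
noncomputable def momNorm (μ : Measure ℝ) (s : ℝ) : ℝ :=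
  (∫ x, |x| ^ s ∂μ) ^ (1 / s)

/-- `‖E + a‖ₛ` for `E` exponential with parameter 1:
`(∫_0^∞ e^{-x} |x + a|^s dx)^{1/s}`. -/
noncomputable def expAddNorm (s a : ℝ) : ℝ :=
  (∫ x in Set.Ioi (0 : ℝ), Real.exp (-x) * |x + a| ^ s) ^ (1 / s)

namespace SR

open MeasureTheory Set


lemma chord {s : Set ℝ} {ψ : ℝ → ℝ} (h : StrictConvexOn ℝ s ψ) {u1 u2 : ℝ} (h1 : u1 ∈ s)
    (h2 : u2 ∈ s) (h12 : u1 < u2) : ∃ a b : ℝ, ψ u1 = a + b * u1 ∧ ψ u2 = a + b * u2 ∧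
    (∀ u ∈ s, u1 < u → u < u2 → ψ u < a + b * u) ∧
    (∀ u ∈ s, u < u1 → a + b * u < ψ u) ∧ (∀ u ∈ s, u2 < u → a + b * u < ψ u) := by
  set b := (ψ u2 - ψ u1) / (u2 - u1) with hb
  have hd : 0 < u2 - u1 := by linarith
  have hb' : b * (u2 - u1) = ψ u2 - ψ u1 := by rw [hb]; field_simp
  refine ⟨ψ u1 - b * u1, b, by ring, by linarith, ?_, ?_, ?_⟩
  · intro u hu hu1 hu2
    have := h.slope_strict_mono_adjacent h1 h2 hu1 hu2
    rw [div_lt_div_iff₀ (by linarith) (by linarith)] at this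
    nlinarith
  · intro u hu hu1
    have := h.slope_strict_mono_adjacent hu h2 hu1 h12
    rw [← hb, div_lt_iff₀ (by linarith)] at this
    nlinarith
  · intro u hu hu1
    have := h.slope_strict_mono_adjacent h1 hu h12 hu1
    rw [← hb, lt_div_iff₀ (by linarith)] at this
    nlinarith

lemma core {q : ℝ} {φ : ℝ → ℝ} (h0 : IntegrableOn φ (Ioi 0))
    (hqi : IntegrableOn (fun t => t ^ q * φ t) (Ioi 0))
    (i0 : ∫ t in Ioi (0:ℝ), φ t = 0) (iq : ∫ t in Ioi (0:ℝ), t ^ q * φ t = 0)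
    (a b c : ℝ) (hk : ∀ t, 0 < t → t ≠ c → 0 ≤ (a + b * t ^ q) * φ t)
    (hk0 : ∀ t, 0 < t → t ≠ c → a + b * t ^ q ≠ 0) :
    ∀ᵐ t ∂(volume.restrict (Ioi (0:ℝ))), φ t = 0 := by
  have hc : ∀ᵐ t ∂(volume.restrict (Ioi (0:ℝ))), t ≠ c := by
    apply ae_restrict_of_ae
    exact Measure.ae_ne volume c
  have hpos : ∀ᵐ t ∂(volume.restrict (Ioi (0:ℝ))), (0:ℝ) < t := by
    exact ae_restrict_mem measurableSet_Ioi
  have e : (fun t => (a + b * t ^ q) * φ t) = fun t => a * φ t + b * (t ^ q * φ t) := by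
    funext t; ring
  have hinteg : IntegrableOn (fun t => (a + b * t ^ q) * φ t) (Ioi 0) := by
    rw [e]; exact (h0.const_mul a).add (hqi.const_mul b)
  have hz : ∫ t in Ioi (0:ℝ), (a + b * t ^ q) * φ t = 0 := by
    rw [e, integral_add (h0.const_mul a) (hqi.const_mul b), integral_const_mul, integral_const_mul,
      i0, iq]; simp
  have hnn : 0 ≤ᵐ[volume.restrict (Ioi (0:ℝ))] fun t => (a + b * t ^ q) * φ t := by
    filter_upwards [hc, hpos] with t h1 h2 using hk t h2 h1
  have := (integral_eq_zero_iff_of_nonneg_ae hnn hinteg).1 hz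
  filter_upwards [this, hc, hpos] with t h1 h2 h3
  simpa [hk0 t h3 h2] using h1

lemma sc_rpow {p q : ℝ} (hq : 0 < q) (hpq : q < p) :
    StrictConvexOn ℝ (Ici 0) (fun u : ℝ => u ^ (p / q)) :=
  strictConvexOn_rpow ((one_lt_div hq).2 hpq)

lemma rpow_pq {p q t : ℝ} (hq : 0 < q) (ht : 0 ≤ t) : (t ^ q) ^ (p / q) = t ^ p := by
  rw [← Real.rpow_mul ht]; congr 1; field_simp

/-- half-line crossing lemma -/
lemma halfline {p q : ℝ} (hq : 0 < q) (hpq : q < p) {φ : ℝ → ℝ} (h0 : IntegrableOn φ (Ioi 0))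
    (hqi : IntegrableOn (fun t => t ^ q * φ t) (Ioi 0))
    (hpi : IntegrableOn (fun t => t ^ p * φ t) (Ioi 0))
    (i0 : ∫ t in Ioi (0:ℝ), φ t = 0) (iq : ∫ t in Ioi (0:ℝ), t ^ q * φ t = 0)
    (hS : OrdConnected {t | 0 < t ∧ 0 < φ t}) : ∫ t in Ioi (0:ℝ), t ^ p * φ t ≤ 0 := by
  have fin : (∀ᵐ t ∂(volume.restrict (Ioi (0:ℝ))), φ t = 0) →
      ∫ t in Ioi (0:ℝ), t ^ p * φ t ≤ 0 := by
    intro h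
    have : (fun t => t ^ p * φ t) =ᵐ[volume.restrict (Ioi (0:ℝ))] fun _ => 0 := by
      filter_upwards [h] with t ht; simp [ht]
    rw [integral_congr_ae this]; simp
  set S := {t | 0 < t ∧ 0 < φ t} with hSd
  have nS : ∀ t, 0 < t → t ∉ S → φ t ≤ 0 := by
    intro t ht h; by_contra h'; exact h ⟨ht, not_le.1 h'⟩
  rcases S.eq_empty_or_nonempty with hE | hne
  · apply fin
    refine core h0 hqi i0 iq (-1) 0 0 ?_ ?_
    · intro t ht _
      have := nS t ht (by rw [hE]; simp)
      simp; exact this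
    · intro t _ _; simp
  have bb : BddBelow S := ⟨0, fun t ht => ht.1.le⟩
  have s1nn : 0 ≤ sInf S := le_csInf hne (fun t ht => ht.1.le)
  have lt1 : ∀ t, 0 < t → t < sInf S → φ t ≤ 0 := fun t ht h =>
    nS t ht (fun h' => absurd (csInf_le bb h') (not_le.2 h))
  by_cases hb : BddAbove S
  · have lt2 : ∀ t, 0 < t → sSup S < t → φ t ≤ 0 := fun t ht h =>
      nS t ht (fun h' => absurd (le_csSup hb h') (not_le.2 h))
    have le12 : sInf S ≤ sSup S := csInf_le_csSup hne bb hb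
    rcases le12.eq_or_lt with heq | hlt
    · apply fin
      refine core h0 hqi i0 iq (-1) 0 (sInf S) ?_ ?_
      · intro t ht hne
        have : φ t ≤ 0 := by
          rcases lt_or_gt_of_ne hne with h | h
          · exact lt1 t ht h
          · exact lt2 t ht (heq ▸ h)
        simp; exact this
      · intro t _ _; simp
    · have mid : ∀ t, sInf S < t → t < sSup S → 0 < φ t := by
        intro t h1 h2
        obtain ⟨x, hx, hx'⟩ := exists_lt_of_csInf_lt hne h1
        obtain ⟨y, hy, hy'⟩ := exists_lt_of_lt_csSup hne h2
        exact (hS.out hx hy ⟨hx'.le, hy'.le⟩).2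
      have hu : (sInf S) ^ q < (sSup S) ^ q := Real.rpow_lt_rpow s1nn hlt hq
      obtain ⟨a, b, e1, e2, m1, m2, m3⟩ := chord (sc_rpow hq hpq)
        (mem_Ici.2 (Real.rpow_nonneg s1nn q))
        (mem_Ici.2 (Real.rpow_nonneg (s1nn.trans le12) q)) hu
      have key : ∀ t, 0 < t → (t ^ p - a - b * t ^ q) * φ t ≤ 0 := by
        intro t ht
        have tq : t ^ q ∈ Ici (0:ℝ) := mem_Ici.2 (Real.rpow_nonneg ht.le q)
        have hp := rpow_pq (p := p) hq ht.le
        rcases lt_trichotomy t (sInf S) with h | h | h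
        · have := m2 _ tq (Real.rpow_lt_rpow ht.le h hq)
          simp only [hp] at this
          exact mul_nonpos_of_nonneg_of_nonpos (by linarith) (lt1 t ht h)
        · simp only [← h, hp] at e1
          rw [e1]; simp
        rcases lt_trichotomy t (sSup S) with h' | h' | h'
        · have := m1 _ tq (Real.rpow_lt_rpow s1nn h hq) (Real.rpow_lt_rpow ht.le h' hq)
          simp only [hp] at this
          exact mul_nonpos_of_nonpos_of_nonneg (by linarith) (mid t h h').le
        · simp only [← h', hp] at e2
          rw [e2]; simp
        · have := m3 _ tq (Real.rpow_lt_rpow (s1nn.trans le12) h' hq)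
          simp only [hp] at this
          exact mul_nonpos_of_nonneg_of_nonpos (by linarith) (lt2 t ht h')
      have e : (fun t => t ^ p * φ t) = fun t => (t ^ p - a - b * t ^ q) * φ t +
          (a * φ t + b * (t ^ q * φ t)) := by funext t; ring
      have hab : IntegrableOn (fun t => a * φ t + b * (t ^ q * φ t)) (Ioi 0) :=
        (h0.const_mul a).add (hqi.const_mul b)
      have hI : IntegrableOn (fun t => (t ^ p - a - b * t ^ q) * φ t) (Ioi 0) := by
        have : (fun t => (t ^ p - a - b * t ^ q) * φ t) =
          fun t => t ^ p * φ t - (a * φ t + b * (t ^ q * φ t)) := by funext t; ring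
        rw [this]; exact hpi.sub hab
      rw [e, integral_add hI hab, integral_add (h0.const_mul a) (hqi.const_mul b),
        integral_const_mul, integral_const_mul, i0, iq]
      simp only [mul_zero, add_zero]
      exact setIntegral_nonpos measurableSet_Ioi (fun t ht => key t ht)
  · apply fin
    refine core h0 hqi i0 iq (-(sInf S) ^ q) 1 (sInf S) ?_ ?_
    · intro t ht hne'
      rcases lt_or_gt_of_ne hne' with h | h
      · have := Real.rpow_lt_rpow ht.le h hq
        exact mul_nonneg_of_nonpos_of_nonpos (by linarith) (lt1 t ht h)
      · have := Real.rpow_lt_rpow s1nn h hq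
        obtain ⟨x, hx, hx'⟩ := exists_lt_of_csInf_lt hne h
        obtain ⟨y, hy, hy'⟩ := not_bddAbove_iff.1 hb t
        have := (hS.out hx hy ⟨hx'.le, hy'.le⟩).2
        exact mul_nonneg (by linarith) this.le
    · intro t ht hne' h
      have : t ^ q = (sInf S) ^ q := by linarith
      exact hne' ((Real.rpow_left_inj ht.le s1nn hq.ne').1 this)

lemma halfline_down {q : ℝ} (hq : 0 < q) {φ : ℝ → ℝ} (h0 : IntegrableOn φ (Ioi 0))
    (hqi : IntegrableOn (fun t => t ^ q * φ t) (Ioi 0))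
    (i0 : ∫ t in Ioi (0:ℝ), φ t = 0) (iq : ∫ t in Ioi (0:ℝ), t ^ q * φ t = 0)
    (hS : ∀ t, 0 < t → 0 < φ t → ∀ t', 0 < t' → t' ≤ t → 0 < φ t') :
    ∀ᵐ t ∂(volume.restrict (Ioi (0:ℝ))), φ t = 0 := by
  set S := {t | 0 < t ∧ 0 < φ t} with hSd
  have nS : ∀ t, 0 < t → t ∉ S → φ t ≤ 0 := by
    intro t ht h; by_contra h'; exact h ⟨ht, not_le.1 h'⟩
  rcases S.eq_empty_or_nonempty with hE | hne
  · refine core h0 hqi i0 iq (-1) 0 0 ?_ ?_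
    · intro t ht _
      have := nS t ht (by rw [hE]; simp)
      simp; exact this
    · intro t _ _; simp
  by_cases hb : BddAbove S
  · have s2 : 0 ≤ sSup S := by
      obtain ⟨x, hx⟩ := hne
      exact hx.1.le.trans (le_csSup hb hx)
    refine core h0 hqi i0 iq ((sSup S) ^ q) (-1) (sSup S) ?_ ?_
    · intro t ht hne'
      rcases lt_or_gt_of_ne hne' with h | h
      · have := Real.rpow_lt_rpow ht.le h hq
        obtain ⟨y, hy, hy'⟩ := exists_lt_of_lt_csSup hne h
        exact mul_nonneg (by linarith) (hS y hy.1 hy.2 t ht hy'.le).le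
      · have := Real.rpow_lt_rpow s2 h hq
        exact mul_nonneg_of_nonpos_of_nonpos (by linarith)
          (nS t ht (fun h' => absurd (le_csSup hb h') (not_le.2 h)))
    · intro t ht hne' h
      have : t ^ q = (sSup S) ^ q := by linarith
      exact hne' ((Real.rpow_left_inj ht.le s2 hq.ne').1 this)
  · refine core h0 hqi i0 iq 1 0 0 ?_ ?_
    · intro t ht _
      obtain ⟨y, hy, hy'⟩ := not_bddAbove_iff.1 hb t
      simp; exact (hS y hy.1 hy.2 t ht hy'.le).le
    · intro t _ _; simp



/-- moments of `α E + a`. -/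
noncomputable def K (s a α : ℝ) : ℝ := ∫ x in Ioi (0:ℝ), Real.exp (-x) * |α * x + a| ^ s

lemma int_exp_pow {s : ℝ} (hs : 0 ≤ s) :
    IntegrableOn (fun x : ℝ => Real.exp (-x) * x ^ s) (Ioi 0) := by
  have := Real.GammaIntegral_convergent (s := s + 1) (by linarith)
  simpa using this

lemma abs_bound {s C a α x : ℝ} (hs : 0 ≤ s) (ha : |a| ≤ C) (hα : |α| ≤ C) (hx : 0 < x) :
    |α * x + a| ^ s ≤ (2 * C) ^ s * (1 + x ^ s) := by
  have hC : 0 ≤ C := (abs_nonneg a).trans ha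
  have h1 : |α * x + a| ≤ 2 * C * max 1 x := by
    have h2 : |α * x + a| ≤ |α| * x + |a| := by
      have := abs_add_le (α * x) a
      rwa [abs_mul, abs_of_pos hx] at this
    have h3 : |α| * x ≤ C * max 1 x := by gcongr; exact le_max_right _ _
    have h4 : |a| ≤ C * max 1 x := ha.trans (by nlinarith [le_max_left 1 x])
    linarith
  have h5 : |α * x + a| ^ s ≤ (2 * C * max 1 x) ^ s := Real.rpow_le_rpow (abs_nonneg _) h1 hs
  rw [Real.mul_rpow (by linarith) (by positivity)] at h5
  refine h5.trans ?_
  gcongr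
  rcases max_choice 1 x with h | h <;> rw [h]
  · rw [Real.one_rpow]; have := Real.rpow_nonneg hx.le s; linarith
  · linarith

lemma int_bound {s : ℝ} (hs : 0 ≤ s) (C : ℝ) :
    IntegrableOn (fun x : ℝ => Real.exp (-x) * (C * (1 + x ^ s))) (Ioi 0) := by
  have e : (fun x : ℝ => Real.exp (-x) * (C * (1 + x ^ s))) =
    fun x => C * (Real.exp (-x) * x ^ (0:ℝ)) + C * (Real.exp (-x) * x ^ s) := by
    funext x; simp; ring
  rw [e]
  exact ((int_exp_pow le_rfl).const_mul C).add ((int_exp_pow hs).const_mul C)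

lemma cont_integrand {s : ℝ} (hs : 0 ≤ s) (a α : ℝ) :
    Continuous (fun x : ℝ => Real.exp (-x) * |α * x + a| ^ s) := by
  refine (by fun_prop : Continuous fun x : ℝ => Real.exp (-x)).mul ?_
  exact (by fun_prop : Continuous fun x : ℝ => |α * x + a|).rpow_const (fun _ => Or.inr hs)

lemma K_int {s : ℝ} (hs : 0 ≤ s) (a α : ℝ) :
    IntegrableOn (fun x : ℝ => Real.exp (-x) * |α * x + a| ^ s) (Ioi 0) := by
  refine (int_bound hs ((2 * max |a| |α|) ^ s)).mono' (cont_integrand hs a α).aestronglyMeasurable ?_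
  filter_upwards [ae_restrict_mem measurableSet_Ioi] with x hx
  rw [Real.norm_of_nonneg (by positivity)]
  gcongr
  exact abs_bound hs (le_max_left _ _) (le_max_right _ _) hx

lemma K_cont {s : ℝ} (hs : 0 ≤ s) : Continuous (fun z : ℝ × ℝ => K s z.1 z.2) := by
  rw [continuous_iff_continuousAt]
  intro z
  unfold K
  set C := max |z.1| |z.2| + 1
  refine continuousAt_of_dominated (bound := fun x => Real.exp (-x) * ((2 * C) ^ s * (1 + x ^ s)))
    ?_ ?_ (int_bound hs _) ?_
  · exact Filter.Eventually.of_forall (fun w => (cont_integrand hs _ _).aestronglyMeasurable)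
  · have o1 : ∀ᶠ w : ℝ × ℝ in nhds z, |w.1| < C :=
      (by fun_prop : Continuous fun w : ℝ × ℝ => |w.1|).continuousAt.eventually_lt_const
        (by have := le_max_left |z.1| |z.2|; simp only [C]; linarith)
    have o2 : ∀ᶠ w : ℝ × ℝ in nhds z, |w.2| < C :=
      (by fun_prop : Continuous fun w : ℝ × ℝ => |w.2|).continuousAt.eventually_lt_const
        (by have := le_max_right |z.1| |z.2|; simp only [C]; linarith)
    filter_upwards [o1, o2] with w h1 h2
    filter_upwards [ae_restrict_mem measurableSet_Ioi] with x hx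
    rw [Real.norm_of_nonneg (by positivity)]
    gcongr
    exact abs_bound hs h1.le h2.le hx
  · refine Filter.Eventually.of_forall (fun x => ?_)
    refine Continuous.continuousAt (continuous_const.mul ?_)
    exact (by fun_prop : Continuous fun w : ℝ × ℝ => |w.2 * x + w.1|).rpow_const
      (fun _ => Or.inr hs)

lemma K_hom {s c : ℝ} (hc : 0 ≤ c) (a α : ℝ) : K s (c * a) (c * α) = c ^ s * K s a α := by
  unfold K
  rw [← integral_const_mul]
  congr 1; funext x
  rw [show c * α * x + c * a = c * (α * x + a) by ring, abs_mul, abs_of_nonneg hc,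
    Real.mul_rpow hc (abs_nonneg _)]
  ring

lemma K_zero_right {s : ℝ} (a : ℝ) : K s a 0 = |a| ^ s := by
  unfold K
  simp only [zero_mul, zero_add]
  rw [integral_mul_const, integral_exp_neg_Ioi_zero, one_mul]

lemma K_nonneg (s a α : ℝ) : 0 ≤ K s a α :=
  setIntegral_nonneg measurableSet_Ioi (fun x _ => by positivity)

lemma K_pos {s : ℝ} (hs : 0 ≤ s) {a α : ℝ} (h : a ≠ 0 ∨ α ≠ 0) : 0 < K s a α := by
  by_cases hα : α = 0
  · rw [hα, K_zero_right]
    have : a ≠ 0 := by tauto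
    positivity
  unfold K
  rw [integral_pos_iff_support_of_nonneg (fun x => by positivity) (K_int hs a α)]
  have hsub : Ioi (max 1 (-a / α)) ⊆ Function.support fun x : ℝ => Real.exp (-x) * |α * x + a| ^ s := by
    intro x hx
    have h1 : -a / α < x := (le_max_right _ _).trans_lt hx
    have : α * x + a ≠ 0 := by
      intro h0
      have : x = -a / α := by field_simp; linarith
      linarith
    exact (mul_pos (Real.exp_pos _) (Real.rpow_pos_of_pos (abs_pos.2 this) _)).ne'
  have hsub2 : Ioi (max 1 (-a / α)) ⊆ Ioi (0:ℝ) := by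
    intro x hx
    exact lt_of_lt_of_le one_pos ((le_max_left _ _).trans (mem_Ioi.1 hx).le)
  refine lt_of_lt_of_le ?_ (measure_mono hsub)
  rw [Measure.restrict_apply measurableSet_Ioi, inter_eq_left.2 hsub2]
  simp

/-- moments of the two-sided exponential -/
noncomputable def D (s m σ w : ℝ) : ℝ := w * K s m (w * σ) + (1 - w) * K s (-m) ((1 - w) * σ)

lemma D_cont {s : ℝ} (hs : 0 ≤ s) : Continuous (fun z : ℝ × ℝ × ℝ => D s z.1 z.2.1 z.2.2) := by
  unfold D
  have h1 : Continuous fun z : ℝ × ℝ × ℝ => K s z.1 (z.2.2 * z.2.1) :=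
    (K_cont hs).comp (by fun_prop : Continuous fun z : ℝ × ℝ × ℝ => (z.1, z.2.2 * z.2.1))
  have h2 : Continuous fun z : ℝ × ℝ × ℝ => K s (-z.1) ((1 - z.2.2) * z.2.1) :=
    (K_cont hs).comp (by fun_prop : Continuous fun z : ℝ × ℝ × ℝ => (-z.1, (1 - z.2.2) * z.2.1))
  fun_prop

lemma D_hom {s c : ℝ} (hc : 0 ≤ c) (m σ w : ℝ) : D s (c * m) (c * σ) w = c ^ s * D s m σ w := by
  unfold D
  rw [show w * (c * σ) = c * (w * σ) by ring, show (1 - w) * (c * σ) = c * ((1 - w) * σ) by ring,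
    show -(c * m) = c * (-m) by ring, K_hom hc, K_hom hc]
  ring

lemma D_symm {s : ℝ} (m σ w : ℝ) : D s (-m) σ (1 - w) = D s m σ w := by
  unfold D; simp; ring

lemma D_nonneg {s m σ w : ℝ} (hw : 0 ≤ w) (hw1 : w ≤ 1) : 0 ≤ D s m σ w :=
  add_nonneg (mul_nonneg hw (K_nonneg _ _ _)) (mul_nonneg (by linarith) (K_nonneg _ _ _))

lemma D_pos {s m σ w : ℝ} (hs : 0 ≤ s) (hw : 0 ≤ w) (hw1 : w ≤ 1) (h : m ≠ 0 ∨ σ ≠ 0) :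
    0 < D s m σ w := by
  unfold D
  rcases hw.eq_or_lt with h0 | h0
  · subst h0; simp only [zero_mul, sub_zero, one_mul, zero_add]
    exact K_pos hs (by simpa using h)
  · have : 0 < K s m (w * σ) := K_pos hs (by rcases h with h | h; exact Or.inl h; exact Or.inr (mul_ne_zero h0.ne' h))
    have h2 := mul_nonneg (by linarith : 0 ≤ 1 - w) (K_nonneg s (-m) ((1 - w) * σ))
    nlinarith [mul_pos h0 this]

noncomputable def Rt (p q m σ w : ℝ) : ℝ := D p m σ w ^ (1 / p) / D q m σ w ^ (1 / q)

lemma Rt_hom {p q c : ℝ} (hp : 0 < p) (hq : 0 < q) (hc : 0 < c) {m σ w : ℝ} (hw : 0 ≤ w)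
    (hw1 : w ≤ 1) : Rt p q (c * m) (c * σ) w = Rt p q m σ w := by
  unfold Rt
  rw [D_hom hc.le, D_hom hc.le, Real.mul_rpow (by positivity) (D_nonneg hw hw1),
    Real.mul_rpow (by positivity) (D_nonneg hw hw1), ← Real.rpow_mul hc.le, ← Real.rpow_mul hc.le,
    mul_one_div_cancel hp.ne', mul_one_div_cancel hq.ne', Real.rpow_one]
  rw [mul_div_mul_left _ _ hc.ne']

lemma exists_max {p q : ℝ} (hq : 0 < q) (hpq : q < p) : ∃ m σ w : ℝ, |m| + σ = 1 ∧ 0 ≤ σ ∧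
    0 ≤ w ∧ w ≤ 1 ∧ ∀ m' σ' w', 0 ≤ σ' → 0 ≤ w' → w' ≤ 1 → (m' ≠ 0 ∨ σ' ≠ 0) →
      Rt p q m' σ' w' ≤ Rt p q m σ w := by
  have hp : 0 < p := hq.trans hpq
  set S : Set (ℝ × ℝ × ℝ) := (Icc (-1) 1 ×ˢ (Icc 0 1 ×ˢ Icc 0 1)) ∩ {z | |z.1| + z.2.1 = 1}
  have hc : IsCompact S := by
    refine (isCompact_Icc.prod (isCompact_Icc.prod isCompact_Icc)).inter_right ?_
    exact isClosed_eq (by fun_prop) continuous_const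
  have hne : S.Nonempty := ⟨(1, 0, 0), by simp [S]⟩
  have nz : ∀ z ∈ S, z.1 ≠ 0 ∨ z.2.1 ≠ 0 := by
    intro z hz
    by_contra h
    push Not at h
    have := hz.2
    simp [h.1, h.2] at this
  have hco : ContinuousOn (fun z : ℝ × ℝ × ℝ => Rt p q z.1 z.2.1 z.2.2) S := by
    unfold Rt
    refine ContinuousOn.div ?_ ?_ ?_
    · exact ((D_cont hp.le).continuousOn).rpow_const (fun z _ => Or.inr (by positivity))
    · exact ((D_cont hq.le).continuousOn).rpow_const (fun z _ => Or.inr (by positivity))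
    · intro z hz
      exact (Real.rpow_pos_of_pos (D_pos hq.le hz.1.2.2.1 hz.1.2.2.2 (nz z hz)) _).ne'
  obtain ⟨z, hz, hmax⟩ := hc.exists_isMaxOn hne hco
  refine ⟨z.1, z.2.1, z.2.2, hz.2, hz.1.2.1.1, hz.1.2.2.1, hz.1.2.2.2, ?_⟩
  intro m σ w hσ hw hw1 hnz
  have hpos : 0 < |m| + σ := by
    rcases hnz with h | h
    · have := abs_pos.2 h; linarith
    · have := lt_of_le_of_ne hσ (Ne.symm h); have := abs_nonneg m; linarith
  set c := (|m| + σ)⁻¹ with hcd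
  have hc0 : 0 < c := inv_pos.2 hpos
  rw [← Rt_hom hp hq hc0 hw hw1]
  have h1 : |c * m| + c * σ = 1 := by
    rw [abs_mul, abs_of_pos hc0, ← mul_add, hcd, inv_mul_cancel₀ hpos.ne']
  have h2 : 0 ≤ c * σ := by positivity
  have h3 : |c * m| ≤ 1 := by linarith
  have hm : (c * m, c * σ, w) ∈ S := by
    refine ⟨⟨abs_le.1 h3, ⟨h2, ?_⟩, hw, hw1⟩, h1⟩
    have := abs_nonneg (c * m)
    show c * σ ≤ 1
    linarith
  exact hmax hm

lemma lyap {p q : ℝ} (hq : 0 < q) (hpq : q < p) : 1 ≤ K p 0 1 ^ (1 / p) / K q 0 1 ^ (1 / q) := by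
  have hp : 0 < p := hq.trans hpq
  have kq : 0 < K q 0 1 := K_pos hq.le (by simp)
  have kp : 0 < K p 0 1 := K_pos hp.le (by simp)
  have main : K q 0 1 ^ (p / q) ≤ K p 0 1 := by
    set c := K q 0 1 with hc
    have pt : ∀ x : ℝ, 0 < x → c ^ (p / q) * (1 - p / q) * Real.exp (-x) +
        c ^ (p / q) * (p / q) / c * (Real.exp (-x) * |1 * x + 0| ^ q) ≤
        Real.exp (-x) * |1 * x + 0| ^ p := by
      intro x hx
      simp only [one_mul, add_zero, abs_of_pos hx]
      have hb := one_add_mul_self_le_rpow_one_add (s := x ^ q / c - 1)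
        (by have : 0 ≤ x ^ q / c := by positivity
            linarith) (p := p / q) ((one_le_div hq).2 hpq.le)
      rw [add_sub_cancel, Real.div_rpow (by positivity) kq.le, rpow_pq hq hx.le,
        le_div_iff₀ (by positivity)] at hb
      have he := Real.exp_pos (-x)
      have := mul_le_mul_of_nonneg_left hb he.le
      refine le_trans (le_of_eq ?_) this
      field_simp
      ring
    have i1 : IntegrableOn (fun x : ℝ => Real.exp (-x)) (Ioi 0) := by
      simpa using int_exp_pow le_rfl
    have I1 := i1.const_mul (c ^ (p / q) * (1 - p / q))
    have I2 := (K_int hq.le 0 1).const_mul (c ^ (p / q) * (p / q) / c)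
    have := setIntegral_mono_on (I1.add I2) (K_int hp.le 0 1) measurableSet_Ioi
      (fun x hx => pt x hx)
    simp only [Pi.add_apply] at this
    rw [integral_add I1 I2, integral_const_mul, integral_const_mul, integral_exp_neg_Ioi_zero] at this
    change _ + _ * K q 0 1 ≤ K p 0 1 at this
    rw [← hc] at this
    refine le_trans (le_of_eq ?_) this
    field_simp
    ring
  rw [one_le_div (by positivity)]
  calc K q 0 1 ^ (1 / q) = (K q 0 1 ^ (p / q)) ^ (1 / p) := by
        rw [← Real.rpow_mul kq.le]; congr 1; field_simp
    _ ≤ _ := Real.rpow_le_rpow (by positivity) main (by positivity)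



/-- unnormalised half-line moments -/
noncomputable def L (s m l : ℝ) : ℝ := ∫ y in Ioi (0:ℝ), Real.exp (-(l * y)) * |y + m| ^ s
noncomputable def Ly (s m l : ℝ) : ℝ :=
  ∫ y in Ioi (0:ℝ), y * (Real.exp (-(l * y)) * |y + m| ^ s)

lemma cont_L {s : ℝ} (hs : 0 ≤ s) (m l : ℝ) :
    Continuous (fun y : ℝ => Real.exp (-(l * y)) * |y + m| ^ s) := by
  refine (by fun_prop : Continuous fun x : ℝ => Real.exp (-(l * x))).mul ?_
  exact (by fun_prop : Continuous fun x : ℝ => |x + m|).rpow_const (fun _ => Or.inr hs)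

lemma L_int {s l : ℝ} (hs : 0 ≤ s) (hl : 0 < l) (m : ℝ) :
    IntegrableOn (fun y : ℝ => Real.exp (-(l * y)) * |y + m| ^ s) (Ioi 0) := by
  have := (integrableOn_Ioi_comp_mul_left_iff
    (fun x : ℝ => Real.exp (-x) * |l⁻¹ * x + m| ^ s) 0 hl).2 (by
      rw [mul_zero]; exact K_int hs m l⁻¹)
  refine this.congr_fun (fun y _ => ?_) measurableSet_Ioi
  simp only
  rw [← mul_assoc, inv_mul_cancel₀ hl.ne', one_mul]

lemma L_eq {s l : ℝ} (hl : 0 < l) (m : ℝ) : L s m l = l⁻¹ * K s m l⁻¹ := by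
  have := integral_comp_mul_left_Ioi (fun x : ℝ => Real.exp (-x) * |l⁻¹ * x + m| ^ s) 0 hl
  rw [mul_zero, smul_eq_mul] at this
  unfold K
  rw [← this]
  unfold L
  refine setIntegral_congr_fun measurableSet_Ioi (fun y _ => ?_)
  try simp only
  rw [← mul_assoc, inv_mul_cancel₀ hl.ne', one_mul]

lemma y_exp_le {l y : ℝ} (hl : 0 < l) : y * Real.exp (-(l * y)) ≤ 2 / l * Real.exp (-(l / 2 * y)) := by
  have h1 : l / 2 * y ≤ Real.exp (l / 2 * y) := by
    have := Real.add_one_le_exp (l / 2 * y); linarith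
  have h2 : y ≤ 2 / l * Real.exp (l / 2 * y) := by
    rw [div_mul_eq_mul_div, le_div_iff₀ hl]; linarith
  have h3 := mul_le_mul_of_nonneg_right h2 (Real.exp_pos (-(l * y))).le
  rw [mul_assoc, ← Real.exp_add] at h3
  refine h3.trans (le_of_eq ?_)
  congr 2
  ring

lemma Ly_int {s l : ℝ} (hs : 0 ≤ s) (hl : 0 < l) (m : ℝ) :
    IntegrableOn (fun y : ℝ => y * (Real.exp (-(l * y)) * |y + m| ^ s)) (Ioi 0) := by
  refine ((L_int hs (half_pos hl) m).const_mul (2 / l)).mono'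
    (continuous_id.mul (cont_L hs m l)).aestronglyMeasurable ?_
  filter_upwards [ae_restrict_mem measurableSet_Ioi] with y hy
  have hy : 0 < y := hy
  rw [Real.norm_of_nonneg (by positivity), ← mul_assoc, ← mul_assoc]
  exact mul_le_mul_of_nonneg_right (y_exp_le hl) (by positivity)

lemma L_deriv_l {s l : ℝ} (hs : 0 ≤ s) (hl : 0 < l) (m : ℝ) :
    HasDerivAt (fun l' => L s m l') (-Ly s m l) l := by
  have key := hasDerivAt_integral_of_dominated_loc_of_deriv_le
    (μ := volume.restrict (Ioi (0:ℝ)))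
    (F := fun l' y => Real.exp (-(l' * y)) * |y + m| ^ s)
    (F' := fun l' y => -(y * (Real.exp (-(l' * y)) * |y + m| ^ s)))
    (x₀ := l) (s := Ioi (l / 2)) (bound := fun y => y * (Real.exp (-(l / 2 * y)) * |y + m| ^ s))
    (Ioi_mem_nhds (by linarith)) ?_ (L_int hs hl m) ?_ ?_ (Ly_int hs (half_pos hl) m) ?_
  · have h2 := key.2
    rw [integral_neg] at h2
    exact h2
  · exact Filter.Eventually.of_forall (fun l' => (cont_L hs m l').aestronglyMeasurable)
  · exact (continuous_id.mul (cont_L hs m l)).neg.aestronglyMeasurable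
  · filter_upwards [ae_restrict_mem measurableSet_Ioi] with y hy l' hl'
    have hy : 0 < y := hy
    have hl' : l / 2 < l' := hl'
    rw [norm_neg, Real.norm_of_nonneg (by positivity)]
    gcongr
  · refine Filter.Eventually.of_forall (fun y l' _ => ?_)
    have h1 : HasDerivAt (fun l' : ℝ => -(l' * y)) (-(1 * y)) l' :=
      ((hasDerivAt_id l').mul_const y).neg
    have h2 := (h1.exp).mul_const (|y + m| ^ s)
    exact h2.congr_deriv (by ring)

lemma int_shift (g : ℝ → ℝ) (a b : ℝ) :
    ∫ x in Ioi a, g (x + b) = ∫ x in Ioi (a + b), g x := by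
  have := (measurePreserving_add_right (volume : Measure ℝ) b).setIntegral_preimage_emb
    (measurableEmbedding_addRight b) g (Ioi (a + b))
  rw [← this]
  congr 2
  ext x; simp

lemma L_shift {s : ℝ} (m l : ℝ) :
    L s m l = Real.exp (l * m) * ∫ x in Ioi m, Real.exp (-(l * x)) * |x| ^ s := by
  rw [← integral_const_mul]
  have := int_shift (fun x : ℝ => Real.exp (l * m) * (Real.exp (-(l * x)) * |x| ^ s)) 0 m
  rw [zero_add] at this
  rw [← this]
  unfold L
  congr 1; funext y
  rw [← mul_assoc, ← Real.exp_add]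
  congr 2
  ring

lemma T_int {s l : ℝ} (hs : 0 ≤ s) (hl : 0 < l) (m : ℝ) :
    IntegrableOn (fun x : ℝ => Real.exp (-(l * x)) * |x| ^ s) (Ioi m) := by
  have h0 : IntegrableOn (fun x : ℝ => Real.exp (-(l * x)) * |x| ^ s) (Ioi 0) := by
    simpa using L_int hs hl 0
  have h1 : IntegrableOn (fun x : ℝ => Real.exp (-(l * x)) * |x| ^ s) (Icc m 0) := by
    have := (cont_L hs 0 l).continuousOn.integrableOn_Icc (a := m) (b := 0) (μ := volume)
    simpa using this
  refine (h1.union h0).mono_set ?_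
  intro x hx
  rcases le_or_gt x 0 with h | h
  · exact Or.inl ⟨(mem_Ioi.1 hx).le, h⟩
  · exact Or.inr h

lemma L_deriv_m {s l : ℝ} (hs : 0 ≤ s) (hl : 0 < l) (m : ℝ) :
    HasDerivAt (fun m' => L s m' l) (l * L s m l - |m| ^ s) m := by
  set g : ℝ → ℝ := fun x => Real.exp (-(l * x)) * |x| ^ s with hg
  have gc : Continuous g := by simpa using cont_L hs 0 l
  have e : (fun m' => L s m' l) = fun m' => Real.exp (l * m') * ((∫ x in Ioi 0, g x) - ∫ x in (0:ℝ)..m', g x) := by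
    funext m'
    rw [L_shift]
    congr 1
    have := intervalIntegral.integral_interval_add_Ioi (a := 0) (b := m') (T_int hs hl 0) (T_int hs hl m')
    simp only [← hg] at this ⊢
    linarith
  have d1 : HasDerivAt (fun m' => Real.exp (l * m')) (Real.exp (l * m) * l) m := by
    have := ((hasDerivAt_id m).const_mul l).exp
    simpa using this
  have d2 : HasDerivAt (fun m' => ∫ x in (0:ℝ)..m', g x) (g m) m :=
    intervalIntegral.integral_hasDerivAt_right (gc.intervalIntegrable _ _)
      (gc.stronglyMeasurableAtFilter _ _) gc.continuousAt
  have d3 := d1.mul (d2.const_sub (∫ x in Ioi 0, g x))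
  have e2 := congrFun e m
  rw [e, e2]
  refine d3.congr_deriv ?_
  have hgm : g m = Real.exp (-(l * m)) * |m| ^ s := rfl
  rw [hgm]
  have : Real.exp (l * m) * Real.exp (-(l * m)) = 1 := by rw [← Real.exp_add]; simp
  linear_combination (-|m| ^ s) * this

lemma stat_gen {p q t0 : ℝ} {P Q M : ℝ → ℝ} {P' Q' M' : ℝ} (hP : HasDerivAt P P' t0)
    (hQ : HasDerivAt Q Q' t0) (hM : HasDerivAt M M' t0) (p0 : 0 < P t0) (q0 : 0 < Q t0)
    (m0 : 0 < M t0)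
    (hmax : ∀ᶠ t in nhds t0, (P t / M t) ^ (1 / p) / (Q t / M t) ^ (1 / q) ≤
      (P t0 / M t0) ^ (1 / p) / (Q t0 / M t0) ^ (1 / q)) :
    1 / (p * P t0) * P' - 1 / (q * Q t0) * Q' + (1 / q - 1 / p) / M t0 * M' = 0 := by
  have dl := (((hP.log p0.ne').const_mul (1 / p)).sub ((hQ.log q0.ne').const_mul (1 / q))).add
    ((hM.log m0.ne').const_mul (1 / q - 1 / p))
  have lm : IsLocalMax (fun t => (1 / p * Real.log (P t) - 1 / q * Real.log (Q t)) +
      (1 / q - 1 / p) * Real.log (M t)) t0 := by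
    have cP := hP.continuousAt.eventually_const_lt p0
    have cQ := hQ.continuousAt.eventually_const_lt q0
    have cM := hM.continuousAt.eventually_const_lt m0
    have lg : ∀ t, 0 < P t → 0 < Q t → 0 < M t →
        Real.log ((P t / M t) ^ (1 / p) / (Q t / M t) ^ (1 / q)) =
        (1 / p * Real.log (P t) - 1 / q * Real.log (Q t)) + (1 / q - 1 / p) * Real.log (M t) := by
      intro t h1 h2 h3
      rw [Real.log_div (by positivity) (by positivity), Real.log_rpow (by positivity),
        Real.log_rpow (by positivity), Real.log_div h1.ne' h3.ne', Real.log_div h2.ne' h3.ne']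
      ring
    filter_upwards [hmax, cP, cQ, cM] with t h h1 h2 h3
    rw [← lg t h1 h2 h3, ← lg t0 p0 q0 m0]
    exact Real.log_le_log (by positivity) h
  have := lm.hasDerivAt_eq_zero dl
  rw [← this]
  field_simp



noncomputable def hh (p q A B C x : ℝ) : ℝ := A * |x| ^ p - B * |x| ^ q + C

lemma hh_cont {p q : ℝ} (hq : 0 < q) (hpq : q < p) (A B C : ℝ) : Continuous (hh p q A B C) := by
  unfold hh
  have h1 : Continuous fun x : ℝ => |x| ^ p := continuous_abs.rpow_const (fun _ => Or.inr (by linarith))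
  have h2 : Continuous fun x : ℝ => |x| ^ q := continuous_abs.rpow_const (fun _ => Or.inr hq.le)
  fun_prop

lemma hh_neg (p q A B C x : ℝ) : hh p q A B C (-x) = hh p q A B C x := by simp [hh]

lemma QC {p q A B C x y z : ℝ} (hq : 0 < q) (hpq : q < p) (hA : 0 < A) (hx : 0 ≤ x) (hxy : x < y)
    (hyz : y < z) (h1 : hh p q A B C x ≤ 0) (h2 : hh p q A B C z ≤ 0) : hh p q A B C y < 0 := by
  have hy : 0 ≤ y := hx.trans hxy.le
  have hz : 0 ≤ z := hy.trans hyz.le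
  have u1 := Real.rpow_lt_rpow hx hxy hq
  have u2 := Real.rpow_lt_rpow hy hyz hq
  obtain ⟨a, b, e1, e2, m1, -, -⟩ := chord (sc_rpow hq hpq) (mem_Ici.2 (Real.rpow_nonneg hx q))
        (mem_Ici.2 (Real.rpow_nonneg hz q)) (u1.trans u2)
  have m := m1 _ (mem_Ici.2 (Real.rpow_nonneg hy q)) u1 u2
  simp only [rpow_pq hq hx, rpow_pq hq hy, rpow_pq hq hz] at e1 e2 m
  unfold hh at *
  rw [abs_of_nonneg hx] at h1
  rw [abs_of_nonneg hy]
  rw [abs_of_nonneg hz] at h2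
  rw [e1] at h1
  rw [e2] at h2
  have h3 : A * y ^ p < A * (a + b * y ^ q) := by gcongr
  rcases le_or_gt 0 (A * b - B) with h | h
  · nlinarith
  · nlinarith

lemma hh_large {p q A B C : ℝ} (hpq : q < p) (hA : 0 < A) (hB : 0 < B) (hC : 0 < C) :
    ∃ T : ℝ, 0 < T ∧ ∀ x, T ≤ x → 0 < hh p q A B C x := by
  refine ⟨(B / A) ^ (1 / (p - q)), by positivity, ?_⟩
  intro x hx
  have hd : 0 < p - q := by linarith
  have hx0 : 0 < x := lt_of_lt_of_le (by positivity) hx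
  have h1 : B / A ≤ x ^ (p - q) := by
    have := Real.rpow_le_rpow (by positivity) hx hd.le
    rwa [← Real.rpow_mul (by positivity), one_div_mul_cancel hd.ne', Real.rpow_one] at this
  rw [div_le_iff₀ hA] at h1
  unfold hh
  rw [abs_of_pos hx0]
  have h2 : x ^ p = x ^ (p - q) * x ^ q := by rw [← Real.rpow_add hx0]; congr 1; ring
  rw [h2]
  have := mul_le_mul_of_nonneg_right h1 (Real.rpow_nonneg hx0.le q)
  nlinarith

lemma hh_expand {p q A B C m l y : ℝ} : Real.exp (-(l * y)) * hh p q A B C (y + m) =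
    A * (Real.exp (-(l * y)) * |y + m| ^ p) - B * (Real.exp (-(l * y)) * |y + m| ^ q) +
      C * (Real.exp (-(l * y)) * |y + m| ^ (0:ℝ)) := by
  rw [Real.rpow_zero]; unfold hh; ring

lemma lin3 {μ : Measure ℝ} {f g k : ℝ → ℝ} (hf : Integrable f μ) (hg : Integrable g μ)
    (hk : Integrable k μ) (A B C : ℝ) : ∫ y, (A * f y - B * g y + C * k y) ∂μ =
      A * (∫ y, f y ∂μ) - B * (∫ y, g y ∂μ) + C * (∫ y, k y ∂μ) := by
  have i12 : Integrable (fun y => A * f y - B * g y) μ := (hf.const_mul A).sub (hg.const_mul B)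
  rw [integral_add i12 (hk.const_mul C), integral_sub (hf.const_mul A) (hg.const_mul B),
    integral_const_mul, integral_const_mul, integral_const_mul]

lemma Phi_int {p q A B C m l : ℝ} (hq : 0 < q) (hpq : q < p) (hl : 0 < l) :
    IntegrableOn (fun y => Real.exp (-(l * y)) * hh p q A B C (y + m)) (Ioi 0) := by
  simp only [hh_expand]
  exact (((L_int (by linarith) hl m).const_mul A).sub ((L_int hq.le hl m).const_mul B)).add
    ((L_int le_rfl hl m).const_mul C)

lemma Phi_eq {p q A B C m l : ℝ} (hq : 0 < q) (hpq : q < p) (hl : 0 < l) :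
    ∫ y in Ioi (0:ℝ), Real.exp (-(l * y)) * hh p q A B C (y + m) =
      A * L p m l - B * L q m l + C * L 0 m l := by
  simp only [hh_expand]
  exact lin3 (L_int (s := p) (by linarith) hl m) (L_int hq.le hl m) (L_int le_rfl hl m) A B C

lemma Psi_int {p q A B C m l : ℝ} (hq : 0 < q) (hpq : q < p) (hl : 0 < l) :
    IntegrableOn (fun y => y * (Real.exp (-(l * y)) * hh p q A B C (y + m))) (Ioi 0) := by
  have e : (fun y => y * (Real.exp (-(l * y)) * hh p q A B C (y + m))) = fun y =>
    A * (y * (Real.exp (-(l * y)) * |y + m| ^ p)) - B * (y * (Real.exp (-(l * y)) * |y + m| ^ q)) +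
      C * (y * (Real.exp (-(l * y)) * |y + m| ^ (0:ℝ))) := by
    funext y; rw [hh_expand]; ring
  rw [e]
  exact (((Ly_int (by linarith) hl m).const_mul A).sub ((Ly_int hq.le hl m).const_mul B)).add
    ((Ly_int le_rfl hl m).const_mul C)

lemma Psi_eq {p q A B C m l : ℝ} (hq : 0 < q) (hpq : q < p) (hl : 0 < l) :
    ∫ y in Ioi (0:ℝ), y * (Real.exp (-(l * y)) * hh p q A B C (y + m)) =
      A * Ly p m l - B * Ly q m l + C * Ly 0 m l := by
  have e : (fun y => y * (Real.exp (-(l * y)) * hh p q A B C (y + m))) = fun y =>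
    A * (y * (Real.exp (-(l * y)) * |y + m| ^ p)) - B * (y * (Real.exp (-(l * y)) * |y + m| ^ q)) +
      C * (y * (Real.exp (-(l * y)) * |y + m| ^ (0:ℝ))) := by
    funext y; rw [hh_expand]; ring
  rw [e]
  exact lin3 (Ly_int (s := p) (by linarith) hl m) (Ly_int hq.le hl m) (Ly_int le_rfl hl m) A B C

/-- if F is continuous, nonneg off a point on the half line, with zero integral, it is zero a.e. -/
lemma zero_of_int {F : ℝ → ℝ} (hi : IntegrableOn F (Ioi 0)) (hnn : ∀ y, 0 < y → 0 ≤ F y)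
    (hz : ∫ y in Ioi (0:ℝ), F y = 0) {u v : ℝ} (hu : 0 ≤ u) (huv : u < v)
    (hne : ∀ y, u < y → y < v → F y ≠ 0) : False := by
  have hnn' : 0 ≤ᵐ[volume.restrict (Ioi (0:ℝ))] F := by
    filter_upwards [ae_restrict_mem measurableSet_Ioi] with y hy using hnn y hy
  have h := (integral_eq_zero_iff_of_nonneg_ae hnn' hi).1 hz
  have h2 : ∀ᵐ y ∂(volume.restrict (Ioo u v)), F y = 0 :=
    ae_restrict_of_ae_restrict_of_subset (fun y hy => mem_Ioi.2 (hu.trans_lt hy.1)) h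
  have h3 : ∀ᵐ y ∂(volume.restrict (Ioo u v)), False := by
    filter_upwards [h2, ae_restrict_mem measurableSet_Ioo] with y h1 h2 using hne y h2.1 h2.2 h1
  rw [Filter.eventually_false_iff_eq_bot, ae_eq_bot, Measure.restrict_eq_zero] at h3
  simp at h3
  linarith

lemma lemF {p q A B C m l r : ℝ} (hq : 0 < q) (hpq : q < p) (hA : 0 < A) (hB : 0 < B) (hC : 0 < C)
    (hm : 0 ≤ m) (hl : 0 < l) (hr : 0 < r)
    (E1 : A * L p m l - B * L q m l + C * L 0 m l = 0)
    (E2 : A * Ly p m l - B * Ly q m l + C * Ly 0 m l = 0)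
    (E3 : A * L p (-m) r - B * L q (-m) r + C * L 0 (-m) r = 0) : m = 0 ∧ l = r := by
  rw [← Phi_eq hq hpq hl] at E1
  rw [← Psi_eq hq hpq hl] at E2
  rw [← Phi_eq hq hpq hr] at E3
  set h := hh p q A B C with hdef
  have hcont : Continuous h := hh_cont hq hpq A B C
  have I1 : IntegrableOn (fun y => Real.exp (-(l * y)) * h (y + m)) (Ioi 0) := Phi_int hq hpq hl
  have I2 : IntegrableOn (fun y => y * (Real.exp (-(l * y)) * h (y + m))) (Ioi 0) :=
    Psi_int hq hpq hl
  have I3 : IntegrableOn (fun y => Real.exp (-(r * y)) * h (y + m)) (Ioi 0) := Phi_int hq hpq hr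
  have I4 : IntegrableOn (fun y => Real.exp (-(r * y)) * h (y + -m)) (Ioi 0) := Phi_int hq hpq hr
  obtain ⟨T, hT0, hT⟩ := hh_large hpq hA hB hC
  set N := {y : ℝ | 0 < y ∧ h (y + m) < 0} with hN
  have Nopen : IsOpen N := by
    have : N = Ioi 0 ∩ (fun y => h (y + m)) ⁻¹' (Iio 0) := rfl
    rw [this]
    exact isOpen_Ioi.inter (isOpen_Iio.preimage (by fun_prop))
  have nN : ∀ y, 0 < y → y ∉ N → 0 ≤ h (y + m) := by
    intro y hy h'; by_contra h''; exact h' ⟨hy, not_le.1 h''⟩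
  have bb : BddBelow N := ⟨0, fun y hy => hy.1.le⟩
  have ba : BddAbove N := by
    refine ⟨T, fun y hy => ?_⟩
    by_contra h'
    have := hT (y + m) (by linarith)
    exact absurd hy.2 (not_lt.2 this.le)
  have hne : N.Nonempty := by
    by_contra hE
    rw [not_nonempty_iff_eq_empty] at hE
    refine zero_of_int I1 (fun y hy => ?_) E1 hT0.le (lt_add_one T) (fun y h1 _ => ?_)
    · exact mul_nonneg (Real.exp_pos _).le (nN y hy (by rw [hE]; simp))
    · exact (mul_pos (Real.exp_pos _) (hT (y + m) (by linarith))).ne'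
  have lt1 : ∀ y, 0 < y → y < sInf N → 0 ≤ h (y + m) := fun y hy h' =>
    nN y hy (fun h'' => absurd (csInf_le bb h'') (not_le.2 h'))
  have lt2 : ∀ y, 0 < y → sSup N < y → 0 ≤ h (y + m) := fun y hy h' =>
    nN y hy (fun h'' => absurd (le_csSup ba h'') (not_le.2 h'))
  have mid : ∀ y, sInf N < y → y < sSup N → h (y + m) < 0 := by
    intro y h1 h2
    obtain ⟨u, hu, hu'⟩ := exists_lt_of_csInf_lt hne h1
    obtain ⟨v, hv, hv'⟩ := exists_lt_of_lt_csSup hne h2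
    exact QC hq hpq hA (by linarith [hu.1]) (by linarith : u + m < y + m)
      (by linarith : y + m < v + m) hu.2.le hv.2.le
  have s1 : 0 ≤ sInf N := le_csInf hne (fun y hy => hy.1.le)
  have s12 : sInf N < sSup N := by
    obtain ⟨y, hy⟩ := hne
    obtain ⟨ε, hε, hball⟩ := Metric.isOpen_iff.1 Nopen y hy
    have h1 : y + ε / 2 ∈ N := hball (by rw [Metric.mem_ball, Real.dist_eq]; rw [add_sub_cancel_left, abs_of_pos (half_pos hε)]; linarith)
    have := csInf_le bb hy
    have := le_csSup ba h1
    linarith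
  have s1pos : 0 < sInf N := by
    by_contra hn
    have s10 : sInf N = 0 := le_antisymm (not_lt.1 hn) s1
    have e : (fun y => (y - sSup N) * (Real.exp (-(l * y)) * h (y + m))) = fun y =>
      y * (Real.exp (-(l * y)) * h (y + m)) - sSup N * (Real.exp (-(l * y)) * h (y + m)) := by
      funext y; ring
    have I : IntegrableOn (fun y => (y - sSup N) * (Real.exp (-(l * y)) * h (y + m))) (Ioi 0) := by
      rw [e]; exact I2.sub (I1.const_mul _)
    refine zero_of_int I (fun y hy => ?_) ?_ s1 s12 (fun y h1 h2 => ?_)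
    · rcases lt_trichotomy y (sSup N) with h' | h' | h'
      · have := mid y (by rw [s10]; exact hy) h'
        exact mul_nonneg_of_nonpos_of_nonpos (by linarith)
          (mul_nonpos_of_nonneg_of_nonpos (Real.exp_pos _).le this.le)
      · rw [h']; simp
      · exact mul_nonneg (by linarith) (mul_nonneg (Real.exp_pos _).le (lt2 y hy h'))
    · rw [e, integral_sub I2 (I1.const_mul _), integral_const_mul, E1, E2]; simp
    · exact mul_ne_zero (by linarith) (mul_ne_zero (Real.exp_pos _).ne' (mid y h1 h2).ne)
  have hpos : ∀ t, 0 ≤ t → t ≤ m → 0 < h t := by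
    intro t ht htm
    by_contra hn
    obtain ⟨y, hy⟩ := hne
    have hyi := csInf_le bb hy
    have : sInf N / 2 ∈ N := by
      refine ⟨by linarith, ?_⟩
      exact QC hq hpq hA ht (by linarith) (by linarith : sInf N / 2 + m < y + m)
        (not_lt.1 hn) hy.2.le
    have := csInf_le bb this
    linarith
  -- J
  set J := ∫ y in Ioi (0:ℝ), Real.exp (-(r * y)) * h (y + m) with hJ
  have Jeq : (∫ y in (0:ℝ)..(2 * m), Real.exp (-(r * y)) * h (y + -m)) +
      Real.exp (-(r * (2 * m))) * J = 0 := by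
    have h1 := intervalIntegral.integral_interval_add_Ioi (a := 0) (b := 2 * m) I4
      (I4.mono_set (Ioi_subset_Ioi (by linarith)))
    rw [E3] at h1
    suffices h2 : Real.exp (-(r * (2 * m))) * J =
        ∫ x in Ioi (2 * m), Real.exp (-(r * x)) * h (x + -m) by rw [h2]; exact h1
    rw [hJ, ← integral_const_mul]
    have := int_shift (fun y => Real.exp (-(r * y)) * h (y + -m)) 0 (2 * m)
    rw [zero_add] at this
    rw [← this]
    congr 1; funext y
    rw [← mul_assoc, ← Real.exp_add]
    congr 2 <;> ring
  have Jnn : l ≠ r → 0 < J := by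
    intro hlr
    have sc : StrictConvexOn ℝ univ (fun y : ℝ => Real.exp ((l - r) * y)) := by
      refine ⟨convex_univ, ?_⟩
      intro x _ y _ hxy a b ha hb hab
      have hne : (l - r) * x ≠ (l - r) * y := fun h' =>
        hxy (mul_left_cancel₀ (sub_ne_zero.2 hlr) h')
      have := strictConvexOn_exp.2 (mem_univ ((l - r) * x)) (mem_univ ((l - r) * y)) hne ha hb hab
      simp only [smul_eq_mul] at this ⊢
      convert this using 2
      ring
    obtain ⟨a, b, e1, e2, m1, m2, m3⟩ := chord sc (mem_univ (sInf N)) (mem_univ (sSup N)) s12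
    set F : ℝ → ℝ := fun y => (Real.exp ((l - r) * y) - (a + b * y)) *
      (Real.exp (-(l * y)) * h (y + m)) with hF
    have eF : F = fun y => Real.exp (-(r * y)) * h (y + m) -
      (a * (Real.exp (-(l * y)) * h (y + m)) + b * (y * (Real.exp (-(l * y)) * h (y + m)))) := by
      funext y
      have : Real.exp (-(r * y)) = Real.exp ((l - r) * y) * Real.exp (-(l * y)) := by
        rw [← Real.exp_add]; congr 1; ring
      simp only [hF]
      rw [this]; ring
    have Iab : IntegrableOn (fun y => a * (Real.exp (-(l * y)) * h (y + m)) +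
      b * (y * (Real.exp (-(l * y)) * h (y + m)))) (Ioi 0) := (I1.const_mul a).add (I2.const_mul b)
    have FI : IntegrableOn F (Ioi 0) := by rw [eF]; exact I3.sub Iab
    have FJ : ∫ y in Ioi (0:ℝ), F y = J := by
      rw [eF, integral_sub I3 Iab, integral_add (I1.const_mul a) (I2.const_mul b),
        integral_const_mul, integral_const_mul, E1, E2]; simp [hJ]
    have Fnn : ∀ y, 0 < y → 0 ≤ F y := by
      intro y hy
      simp only [hF]
      rcases lt_trichotomy y (sInf N) with h' | h' | h'
      · have := m2 y (mem_univ _) h'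
        exact mul_nonneg (by linarith) (mul_nonneg (Real.exp_pos _).le (lt1 y hy h'))
      · rw [h', e1]; simp
      rcases lt_trichotomy y (sSup N) with h'' | h'' | h''
      · have := m1 y (mem_univ _) h' h''
        exact mul_nonneg_of_nonpos_of_nonpos (by linarith)
          (mul_nonpos_of_nonneg_of_nonpos (Real.exp_pos _).le (mid y h' h'').le)
      · rw [h'', e2]; simp
      · have := m3 y (mem_univ _) h''
        exact mul_nonneg (by linarith) (mul_nonneg (Real.exp_pos _).le (lt2 y hy h''))
    have Jnn : 0 ≤ J := by
      rw [← FJ]; exact setIntegral_nonneg measurableSet_Ioi (fun y hy => Fnn y hy)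
    rcases Jnn.eq_or_lt with h0 | h0
    · exfalso
      refine zero_of_int FI Fnn (FJ.trans h0.symm) s1 s12 (fun y h1 h2 => ?_)
      have := m1 y (mem_univ _) h1 h2
      exact mul_ne_zero (by linarith) (mul_ne_zero (Real.exp_pos _).ne' (mid y h1 h2).ne)
    · exact h0
  have Jnn' : 0 ≤ J := by
    by_cases hlr : l = r
    · rw [hJ, ← hlr, E1]
    · exact (Jnn hlr).le
  have m0 : m = 0 := by
    by_contra hmne
    have hmp : 0 < m := lt_of_le_of_ne hm (Ne.symm hmne)
    have : 0 < ∫ y in (0:ℝ)..(2 * m), Real.exp (-(r * y)) * h (y + -m) := by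
      refine intervalIntegral.intervalIntegral_pos_of_pos_on
        (Continuous.intervalIntegrable (by fun_prop) _ _) ?_ (by linarith)
      intro y hy
      refine mul_pos (Real.exp_pos _) ?_
      rcases le_total 0 (y + -m) with h' | h'
      · exact hpos _ h' (by linarith [hy.2])
      · have := hpos (-(y + -m)) (by linarith) (by linarith [hy.1])
        rwa [hdef, hh_neg] at this
    have := mul_nonneg (Real.exp_pos (-(r * (2 * m)))).le Jnn'
    linarith
  refine ⟨m0, ?_⟩
  by_contra hlr
  have := Jnn hlr
  rw [m0] at Jeq
  simp at Jeq
  linarith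

noncomputable def U (s m l r : ℝ) : ℝ := L s m l + L s (-m) r

lemma L_pos {s m l : ℝ} (hs : 0 ≤ s) (hl : 0 < l) : 0 < L s m l := by
  rw [L_eq hl]
  exact mul_pos (inv_pos.2 hl) (K_pos hs (Or.inr (inv_pos.2 hl).ne'))

lemma stat {p q m l r : ℝ} (hq : 0 < q) (hpq : q < p) (hl : 0 < l) (hr : 0 < r)
    (hmax : ∀ m' l' r', 0 < l' → 0 < r' →
      (U p m' l' r' / U 0 m' l' r') ^ (1 / p) / (U q m' l' r' / U 0 m' l' r') ^ (1 / q) ≤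
      (U p m l r / U 0 m l r) ^ (1 / p) / (U q m l r / U 0 m l r) ^ (1 / q)) :
    m = 0 ∧ l = r := by
  have hp : 0 < p := hq.trans hpq
  have up : ∀ s, 0 ≤ s → 0 < U s m l r := fun s hs => add_pos (L_pos hs hl) (L_pos hs hr)
  have P0 := up p hp.le
  have Q0 := up q hq.le
  have M0 := up 0 le_rfl
  set A := 1 / (p * U p m l r) with hA
  set B := 1 / (q * U q m l r) with hB
  set C := (1 / q - 1 / p) / U 0 m l r with hC
  have Ap : 0 < A := by positivity
  have Bp : 0 < B := by positivity
  have Cp : 0 < C := div_pos (sub_pos.2 (one_div_lt_one_div_of_lt hq hpq)) M0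
  -- direction l
  have d1 : ∀ s, 0 ≤ s → HasDerivAt (fun l' => U s m l' r) (-Ly s m l) l := fun s hs =>
    (L_deriv_l hs hl m).add_const _
  have d2 : ∀ s, 0 ≤ s → HasDerivAt (fun r' => U s m l r') (-Ly s (-m) r) r := fun s hs =>
    (L_deriv_l hs hr (-m)).const_add _
  have d3 : ∀ s, 0 ≤ s → HasDerivAt (fun m' => U s m' l r)
      ((l * L s m l - |m| ^ s) - (r * L s (-m) r - |m| ^ s)) m := by
    intro s hs
    have h1 := L_deriv_m hs hl m
    have h2 := (L_deriv_m hs hr (-m)).comp m (hasDerivAt_neg m)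
    refine (h1.add h2).congr_deriv ?_
    rw [abs_neg]; ring
  have e1 := stat_gen (p := p) (q := q) (d1 p hp.le) (d1 q hq.le) (d1 0 le_rfl) P0 Q0 M0
    (by filter_upwards [lt_mem_nhds hl] with t ht using hmax m t r ht hr)
  have e2 := stat_gen (p := p) (q := q) (d2 p hp.le) (d2 q hq.le) (d2 0 le_rfl) P0 Q0 M0
    (by filter_upwards [lt_mem_nhds hr] with t ht using hmax m l t hl ht)
  have e3 := stat_gen (p := p) (q := q) (d3 p hp.le) (d3 q hq.le) (d3 0 le_rfl) P0 Q0 M0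
    (by filter_upwards with t using hmax t l r hl hr)
  rw [← hA, ← hB, ← hC] at e1 e2 e3
  have e0 : (A * L p m l - B * L q m l + C * L 0 m l) +
      (A * L p (-m) r - B * L q (-m) r + C * L 0 (-m) r) = 0 := by
    have : A * U p m l r - B * U q m l r + C * U 0 m l r = 0 := by
      rw [hA, hB, hC]; field_simp; ring
    unfold U at this
    linarith
  have e3' : l * (A * L p m l - B * L q m l + C * L 0 m l) =
      r * (A * L p (-m) r - B * L q (-m) r + C * L 0 (-m) r) := by linear_combination e3
  have z1 : A * L p m l - B * L q m l + C * L 0 m l = 0 := by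
    have : (l + r) * (A * L p m l - B * L q m l + C * L 0 m l) = 0 := by
      linear_combination e3' + r * e0
    rcases mul_eq_zero.1 this with h | h
    · linarith
    · exact h
  have z2 : A * L p (-m) r - B * L q (-m) r + C * L 0 (-m) r = 0 := by linarith
  rcases le_total 0 m with hm | hm
  · exact lemF hq hpq Ap Bp Cp hm hl hr z1 (by linarith) z2
  · have := lemF hq hpq Ap Bp Cp (m := -m) (by linarith) hr hl z2 (by linarith) (by rw [neg_neg]; exact z1)
    exact ⟨by linarith [this.1], this.2.symm⟩

lemma D_eq_U {s m σ w : ℝ} (hσ : 0 < σ) (hw : 0 < w) (hw1 : w < 1) :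
    D s m σ w = U s m (w * σ)⁻¹ ((1 - w) * σ)⁻¹ / σ := by
  have h1 : 0 < w * σ := by positivity
  have h2 : 0 < (1 - w) * σ := mul_pos (by linarith) hσ
  unfold D U
  rw [L_eq (inv_pos.2 h1), L_eq (inv_pos.2 h2), inv_inv, inv_inv]
  field_simp

lemma U_zero {m l r : ℝ} (hl : 0 < l) (hr : 0 < r) : U 0 m l r = l⁻¹ + r⁻¹ := by
  have : ∀ a α, K 0 a α = 1 := by
    intro a α; unfold K; simp only [Real.rpow_zero, mul_one]; exact integral_exp_neg_Ioi_zero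
  unfold U
  rw [L_eq hl, L_eq hr, this, this]; simp

/-- conclusion of the finite dimensional optimisation -/
lemma exists_shift {p q : ℝ} (hq : 0 < q) (hpq : q < p) : ∃ a : ℝ,
    ∀ m' σ' w', 0 ≤ σ' → 0 ≤ w' → w' ≤ 1 → (m' ≠ 0 ∨ σ' ≠ 0) →
      Rt p q m' σ' w' ≤ K p a 1 ^ (1 / p) / K q a 1 ^ (1 / q) := by
  have hp : 0 < p := hq.trans hpq
  obtain ⟨m, σ, w, hmσ, hσ, hw, hw1, hmax⟩ := exists_max hq hpq
  suffices h : ∃ a : ℝ, Rt p q m σ w ≤ K p a 1 ^ (1 / p) / K q a 1 ^ (1 / q) by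
    obtain ⟨a, ha⟩ := h
    exact ⟨a, fun m' σ' w' h1 h2 h3 h4 => (hmax m' σ' w' h1 h2 h3 h4).trans ha⟩
  have Dw1 : ∀ s m σ, D s m σ 1 = K s m σ := by intro s m σ; simp [D]
  have one : ∀ m σ, 0 < σ → Rt p q m σ 1 = K p (m / σ) 1 ^ (1 / p) / K q (m / σ) 1 ^ (1 / q) := by
    intro m σ hσ
    have := Rt_hom (m := m / σ) (σ := 1) (w := 1) hp hq hσ zero_le_one le_rfl
    rw [mul_div_cancel₀ _ hσ.ne', mul_one] at this
    rw [this]; unfold Rt; rw [Dw1, Dw1]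
  rcases hσ.eq_or_lt with h0 | h0
  · refine ⟨0, le_trans (le_of_eq ?_) (lyap hq hpq)⟩
    have hm : |m| = 1 := by rw [← h0] at hmσ; simpa using hmσ
    have : ∀ s, D s m σ w = 1 := by
      intro s
      unfold D
      rw [← h0, mul_zero, mul_zero, K_zero_right, K_zero_right, abs_neg, hm]; simp
    unfold Rt; rw [this, this]; simp
  rcases hw.eq_or_lt with hw0 | hw0
  · refine ⟨-m / σ, le_of_eq ?_⟩
    rw [← one (-m) σ h0]
    unfold Rt
    have : ∀ s, D s m σ w = D s (-m) σ 1 := by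
      intro s; rw [← D_symm, ← hw0]; simp
    rw [this, this]
  rcases hw1.eq_or_lt with hw0' | hw0'
  · exact ⟨m / σ, le_of_eq (by rw [← one m σ h0, hw0'])⟩
  have RU : ∀ m σ w, 0 < σ → 0 < w → w < 1 → Rt p q m σ w =
      (U p m (w * σ)⁻¹ ((1 - w) * σ)⁻¹ / U 0 m (w * σ)⁻¹ ((1 - w) * σ)⁻¹) ^ (1 / p) /
      (U q m (w * σ)⁻¹ ((1 - w) * σ)⁻¹ / U 0 m (w * σ)⁻¹ ((1 - w) * σ)⁻¹) ^ (1 / q) := by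
    intro m σ w h1 h2 h3
    have h4 : 0 < w * σ := by positivity
    have h5 : 0 < (1 - w) * σ := mul_pos (by linarith) h1
    have e : U 0 m (w * σ)⁻¹ ((1 - w) * σ)⁻¹ = σ := by
      rw [U_zero (inv_pos.2 h4) (inv_pos.2 h5), inv_inv, inv_inv]; ring
    unfold Rt
    rw [D_eq_U h1 h2 h3, D_eq_U h1 h2 h3, e]
  have h4 : 0 < w * σ := by positivity
  have h5 : 0 < (1 - w) * σ := mul_pos (by linarith) h0
  obtain ⟨hm0, hlr⟩ := stat (m := m) hq hpq (inv_pos.2 h4) (inv_pos.2 h5) (by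
    intro m' l' r' hl' hr'
    rw [← RU m σ w h0 hw0 hw0']
    have a1 := inv_pos.2 hl'
    have a2 := inv_pos.2 hr'
    set σ' := l'⁻¹ + r'⁻¹ with hσ'
    have σp : 0 < σ' := by positivity
    have hw' : l'⁻¹ / σ' < 1 := by rw [div_lt_one σp]; linarith
    have := hmax m' σ' (l'⁻¹ / σ') σp.le (by positivity) hw'.le (Or.inr σp.ne')
    rw [RU m' σ' _ σp (by positivity) hw'] at this
    have b1 : l'⁻¹ / σ' * σ' = l'⁻¹ := by field_simp
    have b2 : (1 - l'⁻¹ / σ') * σ' = r'⁻¹ := by rw [sub_mul, b1]; simp [hσ']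
    rw [b1, b2, inv_inv, inv_inv] at this
    exact this)
  refine ⟨0, le_of_eq ?_⟩
  have hww : w * σ = (1 - w) * σ := inv_injective hlr
  have : ∀ s, D s m σ w = D s 0 (w * σ) 1 := by
    intro s
    rw [Dw1]
    unfold D
    rw [hm0, ← hww]; simp; ring
  have h := one 0 (w * σ) h4
  rw [zero_div] at h
  rw [← h]; unfold Rt; rw [this, this]



structure Ok (p q : ℝ) (f : ℝ → ℝ) : Prop where
  nn : ∀ x, 0 ≤ f x
  lc : ∀ x y l : ℝ, 0 ≤ l → l ≤ 1 → f x ^ l * f y ^ (1 - l) ≤ f (l * x + (1 - l) * y)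
  i0 : Integrable f
  iq : Integrable (fun x => |x| ^ q * f x)
  ip : Integrable (fun x => |x| ^ p * f x)
  one : ∫ x, f x = 1

lemma Ok.neg {p q : ℝ} {f : ℝ → ℝ} (h : Ok p q f) : Ok p q (fun x => f (-x)) where
  nn x := h.nn _
  lc x y l h0 h1 := by
    have := h.lc (-x) (-y) l h0 h1
    rwa [show l * -x + (1 - l) * -y = -(l * x + (1 - l) * y) by ring] at this
  i0 := h.i0.comp_neg
  iq := by simpa using h.iq.comp_neg
  ip := by simpa using h.ip.comp_neg
  one := by rw [integral_neg_eq_self f volume]; exact h.one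

lemma lc_strict {f : ℝ → ℝ} (nn : ∀ x, 0 ≤ f x)
    (lc : ∀ x y l : ℝ, 0 ≤ l → l ≤ 1 → f x ^ l * f y ^ (1 - l) ≤ f (l * x + (1 - l) * y))
    {B c x y l : ℝ} (hB : 0 ≤ B) (hx0 : 0 < f x) (hx : B * Real.exp (c * x) ≤ f x)
    (hy : B * Real.exp (c * y) < f y) (hl : 0 < l) (hl1 : l < 1) :
    B * Real.exp (c * (l * x + (1 - l) * y)) < f (l * x + (1 - l) * y) := by
  refine lt_of_lt_of_le ?_ (lc x y l hl.le hl1.le)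
  have e : B * Real.exp (c * (l * x + (1 - l) * y)) =
      (B * Real.exp (c * x)) ^ l * (B * Real.exp (c * y)) ^ (1 - l) := by
    rw [Real.mul_rpow hB (Real.exp_pos _).le, Real.mul_rpow hB (Real.exp_pos _).le,
      ← Real.exp_mul, ← Real.exp_mul]
    have : B ^ l * B ^ (1 - l) = B := by
      rw [← Real.rpow_add' hB (by norm_num)]; norm_num
    calc _ = (B ^ l * B ^ (1 - l)) * Real.exp (c * x * l + c * y * (1 - l)) := by
          rw [this]; congr 2; ring
      _ = _ := by rw [Real.exp_add]; ring
  rw [e]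
  calc _ ≤ f x ^ l * (B * Real.exp (c * y)) ^ (1 - l) := by gcongr
    _ < _ := by
      have := Real.rpow_lt_rpow (by positivity) hy (by linarith : 0 < 1 - l)
      have h2 := Real.rpow_pos_of_pos hx0 l
      gcongr

lemma lc_between {f : ℝ → ℝ} (nn : ∀ x, 0 ≤ f x)
    (lc : ∀ x y l : ℝ, 0 ≤ l → l ≤ 1 → f x ^ l * f y ^ (1 - l) ≤ f (l * x + (1 - l) * y))
    {B c x y z : ℝ} (hB : 0 ≤ B) (hx0 : 0 < f x) (hx : B * Real.exp (c * x) ≤ f x)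
    (hy : B * Real.exp (c * y) < f y) (hz : x < z) (hz1 : z < y) :
    B * Real.exp (c * z) < f z := by
  have hd : 0 < y - x := by linarith
  have := lc_strict nn lc hB hx0 hx hy (l := (y - z) / (y - x)) (div_pos (by linarith) hd)
    ((div_lt_one hd).2 (by linarith))
  have e : (y - z) / (y - x) * x + (1 - (y - z) / (y - x)) * y = z := by field_simp; ring
  rwa [e] at this

lemma split {F : ℝ → ℝ} (hF : Integrable F) :
    ∫ x, F x = (∫ t in Ioi (0:ℝ), F t) + ∫ t in Ioi (0:ℝ), F (-t) := by
  rw [integral_comp_neg_Ioi, neg_zero, add_comm]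
  rw [← integral_add_compl (measurableSet_Iic (a := (0:ℝ))) hF, compl_Iic]

lemma half_int {s : ℝ} {f : ℝ → ℝ} (h : Integrable (fun x => |x| ^ s * f x)) :
    IntegrableOn (fun t => t ^ s * f t) (Ioi 0) := by
  refine h.integrableOn.congr_fun (fun t ht => ?_) measurableSet_Ioi
  simp only; rw [abs_of_pos ht]

lemma split_s {s : ℝ} {f : ℝ → ℝ} (h : Integrable (fun x => |x| ^ s * f x)) :
    ∫ x, |x| ^ s * f x = (∫ t in Ioi (0:ℝ), t ^ s * f t) + ∫ t in Ioi (0:ℝ), t ^ s * f (-t) := by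
  rw [split h]
  congr 1
  · refine setIntegral_congr_fun measurableSet_Ioi (fun t ht => ?_)
    change |t| ^ s * f t = _; rw [abs_of_pos ht]
  · refine setIntegral_congr_fun measurableSet_Ioi (fun t ht => ?_)
    change |(-t)| ^ s * f (-t) = _; rw [abs_neg, abs_of_pos ht]

lemma exp_half {s b M : ℝ} (hs : 0 ≤ s) (hb : 0 < b) :
    IntegrableOn (fun t => t ^ s * (M / b * Real.exp (-b⁻¹ * t))) (Ioi 0) ∧
    ∫ t in Ioi (0:ℝ), t ^ s * (M / b * Real.exp (-b⁻¹ * t)) = M * K s 0 b := by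
  have hb' := inv_pos.2 hb
  have e : ∀ t ∈ Ioi (0:ℝ), M / b * (Real.exp (-(b⁻¹ * t)) * |t + 0| ^ s) =
      t ^ s * (M / b * Real.exp (-b⁻¹ * t)) := by
    intro t ht
    rw [add_zero, abs_of_pos ht, neg_mul]; ring
  constructor
  · exact IntegrableOn.congr_fun ((L_int hs hb' 0).const_mul (M / b)) e measurableSet_Ioi
  · rw [← setIntegral_congr_fun measurableSet_Ioi e, integral_const_mul]
    change M / b * L s 0 b⁻¹ = _
    rw [L_eq hb', inv_inv]; field_simp

lemma K_zero (a α : ℝ) : K 0 a α = 1 := by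
  unfold K; simp only [Real.rpow_zero, mul_one]; exact integral_exp_neg_Ioi_zero

lemma pow_zero_mul (F : ℝ → ℝ) : (fun t : ℝ => t ^ (0:ℝ) * F t) = F := by
  funext t; rw [Real.rpow_zero, one_mul]

/-- match mass and q-moment by an exponential -/
lemma exists_match {q M Q : ℝ} (hq : 0 < q) (hM : 0 < M) (hQ : 0 < Q) :
    ∃ b, 0 < b ∧ M * K q 0 b = Q := by
  have k1 : 0 < K q 0 1 := K_pos hq.le (by simp)
  refine ⟨(Q / (M * K q 0 1)) ^ (1 / q), by positivity, ?_⟩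
  have := K_hom (s := q) (c := (Q / (M * K q 0 1)) ^ (1 / q)) (by positivity) 0 1
  rw [mul_zero, mul_one] at this
  rw [this, ← Real.rpow_mul (by positivity), one_div_mul_cancel hq.ne', Real.rpow_one]
  field_simp

/-- positivity of the half moments -/
lemma half_pos_mom {s : ℝ} {F : ℝ → ℝ} (nn : ∀ x, 0 ≤ F x) (h0 : IntegrableOn F (Ioi 0))
    (hs : IntegrableOn (fun t => t ^ s * F t) (Ioi 0)) (hM : 0 < ∫ t in Ioi (0:ℝ), F t) :
    0 < ∫ t in Ioi (0:ℝ), t ^ s * F t := by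
  have hnn : 0 ≤ ∫ t in Ioi (0:ℝ), t ^ s * F t := setIntegral_nonneg measurableSet_Ioi
    (fun t ht => mul_nonneg (Real.rpow_nonneg (le_of_lt ht) _) (nn t))
  rcases hnn.eq_or_lt with h | h
  · exfalso
    have hnn' : 0 ≤ᵐ[volume.restrict (Ioi (0:ℝ))] (fun t => t ^ s * F t) := by
      filter_upwards [ae_restrict_mem measurableSet_Ioi] with t ht using
        mul_nonneg (Real.rpow_nonneg (le_of_lt ht) _) (nn t)
    have h1 := (integral_eq_zero_iff_of_nonneg_ae hnn' hs).1 h.symm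
    have h2 : F =ᵐ[volume.restrict (Ioi (0:ℝ))] 0 := by
      filter_upwards [h1, ae_restrict_mem measurableSet_Ioi] with t h1 h2
      have : t ^ s ≠ 0 := (Real.rpow_pos_of_pos h2 s).ne'
      simpa [this] using h1
    rw [integral_congr_ae h2] at hM
    simp at hM
  · exact h

lemma half_zero_mom {s : ℝ} {F : ℝ → ℝ} (nn : ∀ x, 0 ≤ F x) (h0 : IntegrableOn F (Ioi 0))
    (hM : ∫ t in Ioi (0:ℝ), F t = 0) : ∫ t in Ioi (0:ℝ), t ^ s * F t = 0 := by
  have h1 := (integral_eq_zero_iff_of_nonneg nn h0).1 hM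
  have h2 : (fun t => t ^ s * F t) =ᵐ[volume.restrict (Ioi (0:ℝ))] 0 := by
    filter_upwards [h1] with t h1; simp only [h1]; simp
  rw [integral_congr_ae h2]; simp

/-- comparison with the matched exponential -/
lemma match_le {p q M b : ℝ} {F : ℝ → ℝ} (hq : 0 < q) (hpq : q < p) (nn : ∀ x, 0 ≤ F x)
    (lc : ∀ x y l : ℝ, 0 ≤ l → l ≤ 1 → F x ^ l * F y ^ (1 - l) ≤ F (l * x + (1 - l) * y))
    (i0 : IntegrableOn F (Ioi 0)) (iq : IntegrableOn (fun t => t ^ q * F t) (Ioi 0))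
    (ip : IntegrableOn (fun t => t ^ p * F t) (Ioi 0)) (hM : 0 < M) (hb : 0 < b)
    (e0 : ∫ t in Ioi (0:ℝ), F t = M) (eq : ∫ t in Ioi (0:ℝ), t ^ q * F t = M * K q 0 b) :
    ∫ t in Ioi (0:ℝ), t ^ p * F t ≤ M * K p 0 b := by
  have hp : 0 < p := hq.trans hpq
  obtain ⟨G, hG⟩ : ∃ G : ℝ → ℝ, G = fun t => M / b * Real.exp (-b⁻¹ * t) := ⟨_, rfl⟩
  have gg : ∀ s : ℝ, 0 ≤ s → IntegrableOn (fun t => t ^ s * G t) (Ioi 0) ∧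
    ∫ t in Ioi (0:ℝ), t ^ s * G t = M * K s 0 b := by
    intro s hs; rw [hG]; exact exp_half hs hb
  obtain ⟨g0, g0'⟩ := gg 0 le_rfl
  obtain ⟨gq, gq'⟩ := gg q hq.le
  obtain ⟨gp, gp'⟩ := gg p hp.le
  rw [pow_zero_mul G] at g0
  rw [pow_zero_mul G, K_zero, mul_one] at g0'
  have ee : ∀ s : ℝ, (fun t => t ^ s * (F t - G t)) = fun t => t ^ s * F t - t ^ s * G t := by
    intro s; funext t; ring
  have := halfline hq hpq (φ := fun t => F t - G t) (i0.sub g0) (by rw [ee]; exact iq.sub gq)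
    (by rw [ee]; exact ip.sub gp) (by rw [integral_sub i0 g0, e0, g0', sub_self])
    (by rw [ee, integral_sub iq gq, eq, gq', sub_self]) (by
      refine ⟨fun x hx y hy z hz => ?_⟩
      have hx2 := hx.2
      have hy2 := hy.2
      simp only [sub_pos] at hx2 hy2 ⊢
      rw [hG] at hx2 hy2 ⊢
      have hz0 : 0 < z := hx.1.trans_le hz.1
      refine ⟨hz0, ?_⟩
      rcases hz.1.eq_or_lt with h | h
      · rw [← h]; exact hx2
      rcases hz.2.eq_or_lt with h' | h'
      · rw [h']; exact hy2
      exact lc_between nn lc (by positivity) (lt_of_le_of_lt (by positivity) hx2) hx2.le hy2 h h')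
  rw [ee, integral_sub ip gp, gp'] at this
  linarith

/-- the two-sided comparison density on the positive half-line -/
noncomputable def gp (B b m α t : ℝ) : ℝ :=
  if t ≤ m then B * Real.exp (b⁻¹ * t) else
    if α = 0 then 0 else B * Real.exp (b⁻¹ * m) * Real.exp (α⁻¹ * m) * Real.exp (-α⁻¹ * t)

lemma gp_mom {s B b m α : ℝ} (hs : 0 ≤ s) (hb : 0 < b) (hm : 0 ≤ m) (hα : 0 ≤ α) :
    IntegrableOn (fun t => t ^ s * gp B b m α t) (Ioi 0) ∧
    (∫ t in Ioi (0:ℝ), t ^ s * gp B b m α t) + B * b * K s 0 b =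
      B * Real.exp (b⁻¹ * m) * (α * K s m α + b * K s (-m) b) := by
  have hb' := inv_pos.2 hb
  set H := B * Real.exp (b⁻¹ * m) with hH
  have cB : Continuous (fun t : ℝ => B * (Real.exp (b⁻¹ * t) * |t| ^ s)) := by
    refine continuous_const.mul ((by fun_prop : Continuous fun x : ℝ => Real.exp (b⁻¹ * x)).mul ?_)
    exact continuous_abs.rpow_const (fun _ => Or.inr hs)
  have e1 : ∀ t ∈ Ioc (0:ℝ) m, B * (Real.exp (b⁻¹ * t) * |t| ^ s) = t ^ s * gp B b m α t := by
    intro t ht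
    unfold gp
    rw [if_pos ht.2, abs_of_pos ht.1]; ring
  have i1 : IntegrableOn (fun t => t ^ s * gp B b m α t) (Ioc 0 m) :=
    (cB.continuousOn.integrableOn_Icc.mono_set Ioc_subset_Icc_self).congr_fun e1 measurableSet_Ioc
  have I1 : ∫ t in Ioc 0 m, t ^ s * gp B b m α t = B * ∫ t in (0:ℝ)..m, Real.exp (b⁻¹ * t) * |t| ^ s := by
    rw [← setIntegral_congr_fun measurableSet_Ioc e1, integral_const_mul,
      intervalIntegral.integral_of_le hm]
  have tail : IntegrableOn (fun t => t ^ s * gp B b m α t) (Ioi m) ∧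
      ∫ t in Ioi m, t ^ s * gp B b m α t = H * (α * K s m α) := by
    by_cases h0 : α = 0
    · have e : ∀ t ∈ Ioi m, (fun _ => (0:ℝ)) t = t ^ s * gp B b m α t := by
        intro t ht
        unfold gp
        rw [if_neg (not_le.2 ht), if_pos h0, mul_zero]
      constructor
      · exact integrableOn_zero.congr_fun e measurableSet_Ioi
      · rw [← setIntegral_congr_fun measurableSet_Ioi e, h0]; simp
    · have hα' : 0 < α⁻¹ := inv_pos.2 (lt_of_le_of_ne hα (Ne.symm h0))
      have e : ∀ t ∈ Ioi m, H * Real.exp (α⁻¹ * m) * (Real.exp (-(α⁻¹ * t)) * |t| ^ s) =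
          t ^ s * gp B b m α t := by
        intro t ht
        unfold gp
        rw [if_neg (not_le.2 ht), if_neg h0, abs_of_pos (hm.trans_lt ht), ← hH, neg_mul]; ring
      constructor
      · exact IntegrableOn.congr_fun ((T_int hs hα' m).const_mul _) e measurableSet_Ioi
      · rw [← setIntegral_congr_fun measurableSet_Ioi e, integral_const_mul, mul_assoc, ← L_shift,
          L_eq hα', inv_inv]
  have hun : Ioi (0:ℝ) = Ioc 0 m ∪ Ioi m := (Ioc_union_Ioi_eq_Ioi hm).symm
  have hI : IntegrableOn (fun t => t ^ s * gp B b m α t) (Ioi 0) := by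
    rw [hun]; exact i1.union tail.1
  refine ⟨hI, ?_⟩
  rw [hun, setIntegral_union (Ioc_disjoint_Ioi le_rfl) measurableSet_Ioi i1 tail.1, I1, tail.2]
  have key : H * (b * K s (-m) b) = B * (∫ t in (0:ℝ)..m, Real.exp (b⁻¹ * t) * |t| ^ s) +
      B * b * K s 0 b := by
    have h1 : b * K s (-m) b = L s (-m) b⁻¹ := by rw [L_eq hb', inv_inv]
    have h2 : b * K s 0 b = L s 0 b⁻¹ := by rw [L_eq hb', inv_inv]
    rw [mul_assoc B b, h1, h2, L_shift, L_shift]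
    have h3 := intervalIntegral.integral_interval_add_Ioi (a := -m) (b := 0)
      (T_int hs hb' (-m)) (T_int hs hb' 0)
    rw [← h3]
    have h4 := intervalIntegral.integral_comp_neg (a := 0) (b := m)
      (fun x : ℝ => Real.exp (-(b⁻¹ * x)) * |x| ^ s)
    simp only [neg_zero, mul_neg, neg_neg, abs_neg] at h4
    rw [← h4]
    have h5 : Real.exp (b⁻¹ * m) * Real.exp (b⁻¹ * -m) = 1 := by
      rw [← Real.exp_add]; simp
    rw [mul_zero, Real.exp_zero, one_mul, hH, ← mul_assoc, mul_assoc B, h5]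
    ring
  linarith



lemma ae_pick {P : ℝ → Prop} (h : ∀ᵐ t ∂(volume.restrict (Ioi (0:ℝ))), P t) {a b : ℝ} (ha : 0 ≤ a)
    (hab : a < b) : ∃ t, a < t ∧ t < b ∧ P t := by
  have h1 : ∀ᵐ t ∂(volume.restrict (Ioo a b)), P t :=
    ae_mono (Measure.restrict_mono (fun t ht => lt_of_le_of_lt ha ht.1) le_rfl) h
  have h2 : (ae (volume.restrict (Ioo a b))).NeBot := by
    rw [ae_neBot]
    intro h
    rw [Measure.restrict_eq_zero, Real.volume_Ioo, ENNReal.ofReal_eq_zero] at h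
    linarith
  obtain ⟨t, ht, ht'⟩ := (h1.and (ae_restrict_mem measurableSet_Ioo)).exists
  exact ⟨t, ht'.1, ht'.2, ht⟩

lemma lemB {q M b : ℝ} {f : ℝ → ℝ} (hq : 0 < q) (nn : ∀ x, 0 ≤ f x)
    (lc : ∀ x y l : ℝ, 0 ≤ l → l ≤ 1 → f x ^ l * f y ^ (1 - l) ≤ f (l * x + (1 - l) * y))
    (i0 : IntegrableOn (fun t => f (-t)) (Ioi 0))
    (iq : IntegrableOn (fun t => t ^ q * f (-t)) (Ioi 0)) (hM : 0 < M) (hb : 0 < b)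
    (e0 : ∫ t in Ioi (0:ℝ), f (-t) = M) (eq : ∫ t in Ioi (0:ℝ), t ^ q * f (-t) = M * K q 0 b)
    {x : ℝ} (hx : 0 ≤ x) : f x ≤ M / b * Real.exp (b⁻¹ * x) := by
  by_contra hcon
  rw [not_le] at hcon
  have hMb : 0 < M / b := div_pos hM hb
  obtain ⟨G, hG⟩ : ∃ G : ℝ → ℝ, G = fun t => M / b * Real.exp (-b⁻¹ * t) := ⟨_, rfl⟩
  have gg : ∀ s : ℝ, 0 ≤ s → IntegrableOn (fun t => t ^ s * G t) (Ioi 0) ∧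
    ∫ t in Ioi (0:ℝ), t ^ s * G t = M * K s 0 b := by
    intro s hs; rw [hG]; exact exp_half hs hb
  obtain ⟨g0, g0'⟩ := gg 0 le_rfl
  obtain ⟨gq, gq'⟩ := gg q hq.le
  rw [pow_zero_mul G] at g0
  rw [pow_zero_mul G, K_zero, mul_one] at g0'
  have hGe : ∀ t, G t = M / b * Real.exp (b⁻¹ * -t) := by
    intro t; rw [hG]; simp only; congr 2; ring
  have ee : ∀ s : ℝ, (fun t => t ^ s * (f (-t) - G t)) = fun t => t ^ s * f (-t) - t ^ s * G t := by
    intro s; funext t; ring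
  have key := halfline_down hq (φ := fun t => f (-t) - G t) (i0.sub g0)
    (by rw [ee]; exact iq.sub gq) (by rw [integral_sub i0 g0, e0, g0', sub_self])
    (by rw [ee, integral_sub iq gq, eq, gq', sub_self]) (by
      intro t ht h t' ht' hle
      rcases hle.eq_or_lt with h' | h'
      · rw [h']; exact h
      have h2 := sub_pos.1 h
      refine sub_pos.2 ?_
      rw [hGe] at h2 ⊢
      exact lc_between nn lc hMb.le (lt_of_le_of_lt (by positivity) h2) h2.le hcon
        (neg_lt_neg h') (by linarith))
  obtain ⟨t1, h1, h1', h1e⟩ := ae_pick key (zero_le_one) one_lt_two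
  obtain ⟨t2, h2, h2', h2e⟩ := ae_pick key le_rfl zero_lt_one
  rw [hGe, sub_eq_zero] at h1e h2e
  have := lc_between nn lc (x := -t1) (z := -t2) hMb.le (by rw [h1e]; positivity) h1e.ge hcon
    (by linarith) (by linarith)
  linarith

def Good (p q : ℝ) (f : ℝ → ℝ) : Prop :=
  ∃ m σ w : ℝ, 0 ≤ σ ∧ 0 ≤ w ∧ w ≤ 1 ∧ (m ≠ 0 ∨ σ ≠ 0) ∧ ∫ x, |x| ^ q * f x = D q m σ w ∧
    ∫ x, |x| ^ p * f x ≤ D p m σ w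

lemma Good.of_neg {p q : ℝ} {f : ℝ → ℝ} (h : Good p q (fun x => f (-x))) : Good p q f := by
  obtain ⟨m, σ, w, h1, h2, h3, h4, h5, h6⟩ := h
  have e : ∀ s : ℝ, ∫ x, |x| ^ s * f (-x) = ∫ x, |x| ^ s * f x := by
    intro s
    rw [← integral_neg_eq_self (fun x : ℝ => |x| ^ s * f x)]
    simp only [abs_neg]
  rw [e] at h5 h6
  exact ⟨m, σ, w, h1, h2, h3, h4, h5, h6⟩

lemma gp_D {s M b w : ℝ} (hs : 0 ≤ s) (hb : 0 < b) (hM : 0 < M) (hw : 0 ≤ w) (hw1 : w ≤ 1 - M) :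
    IntegrableOn (fun t => t ^ s * gp (M / b) b (b * Real.log ((1 - w) / M)) (w * (b / (1 - w))) t)
      (Ioi 0) ∧
    (∫ t in Ioi (0:ℝ), t ^ s * gp (M / b) b (b * Real.log ((1 - w) / M)) (w * (b / (1 - w))) t) +
      M * K s 0 b = D s (b * Real.log ((1 - w) / M)) (b / (1 - w)) w := by
  have h1 : 0 < 1 - w := by linarith
  have hm : 0 ≤ b * Real.log ((1 - w) / M) :=
    mul_nonneg hb.le (Real.log_nonneg ((one_le_div hM).2 (by linarith)))
  obtain ⟨A, B⟩ := gp_mom (B := M / b) (α := w * (b / (1 - w))) hs hb hm (by positivity)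
  refine ⟨A, ?_⟩
  rw [div_mul_cancel₀ _ hb.ne', inv_mul_cancel_left₀ hb.ne', Real.exp_log (div_pos h1 hM)] at B
  rw [B]
  unfold D
  rw [mul_div_cancel₀ b h1.ne']
  field_simp

lemma stage_main {p q M N b g : ℝ} {f : ℝ → ℝ} (hq : 0 < q) (hpq : q < p) (h : Ok p q f)
    (hM : 0 < M) (hN : 0 < N) (hb : 0 < b) (hg : 0 < g)
    (eM : ∫ t in Ioi (0:ℝ), f (-t) = M) (eN : ∫ t in Ioi (0:ℝ), f t = N)
    (qM : ∫ t in Ioi (0:ℝ), t ^ q * f (-t) = M * K q 0 b)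
    (qN : ∫ t in Ioi (0:ℝ), t ^ q * f t = N * K q 0 g)
    (hle : g * M ≤ N * b) : Good p q f := by
  have hp : 0 < p := hq.trans hpq
  have hMN : N = 1 - M := by
    have := split h.i0
    rw [h.one, eM, eN] at this; linarith
  have hn := h.neg
  have iM0 : IntegrableOn (fun t => f (-t)) (Ioi 0) := hn.i0.integrableOn
  have iMq := half_int hn.iq
  have iMp := half_int hn.ip
  have iN0 : IntegrableOn f (Ioi 0) := h.i0.integrableOn
  have iNq := half_int h.iq
  have iNp := half_int h.ip
  have hB : ∀ x, 0 ≤ x → f x ≤ M / b * Real.exp (b⁻¹ * x) := fun x hx =>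
    lemB hq h.nn h.lc iM0 iMq hM hb eM qM hx
  have pM := match_le hq hpq hn.nn hn.lc iM0 iMq iMp hM hb eM qM
  have hMb : 0 < M / b := div_pos hM hb
  -- mass of gp
  have mass : ∀ w, 0 ≤ w → w ≤ 1 - M →
      IntegrableOn (gp (M / b) b (b * Real.log ((1 - w) / M)) (w * (b / (1 - w)))) (Ioi 0) ∧
      ∫ t in Ioi (0:ℝ), gp (M / b) b (b * Real.log ((1 - w) / M)) (w * (b / (1 - w))) t = N := by
    intro w hw hw1
    obtain ⟨A, B⟩ := gp_D (s := 0) le_rfl hb hM hw hw1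
    rw [pow_zero_mul] at A
    rw [pow_zero_mul] at B
    refine ⟨A, ?_⟩
    unfold D at B
    simp only [K_zero] at B
    linarith
  -- intermediate value
  obtain ⟨w, ⟨hw, hw1⟩, hwe⟩ : ∃ w ∈ Icc 0 (1 - M),
      D q (b * Real.log ((1 - w) / M)) (b / (1 - w)) w = N * K q 0 g + M * K q 0 b := by
    have hc : ContinuousOn (fun w => D q (b * Real.log ((1 - w) / M)) (b / (1 - w)) w)
        (Icc 0 (1 - M)) := by
      have h1 : ContinuousOn (fun w : ℝ => (b * Real.log ((1 - w) / M), (b / (1 - w), w)))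
          (Icc 0 (1 - M)) := by
        have ne : ∀ w ∈ Icc (0:ℝ) (1 - M), 1 - w ≠ 0 := fun w hw => by
          have := hw.2; intro h; linarith
        refine ContinuousOn.prodMk ?_ (ContinuousOn.prodMk ?_ continuousOn_id)
        · refine continuousOn_const.mul (ContinuousOn.log (by fun_prop) ?_)
          intro w hw; exact div_ne_zero (ne w hw) hM.ne'
        · exact continuousOn_const.div (by fun_prop) ne
      exact (D_cont hq.le).comp_continuousOn h1
    refine intermediate_value_Icc (by linarith) hc ⟨?_, ?_⟩
    · -- lower end
      obtain ⟨A, B⟩ := gp_D (s := q) hq.le hb hM le_rfl (by linarith : (0:ℝ) ≤ 1 - M)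
      obtain ⟨A0, B0⟩ := mass 0 le_rfl (by linarith)
      show D q (b * Real.log ((1 - 0) / M)) (b / (1 - 0)) 0 ≤ _
      rw [← B, ← qN]
      have hm : 0 ≤ b * Real.log ((1 - 0) / M) :=
        mul_nonneg hb.le (Real.log_nonneg ((one_le_div hM).2 (by linarith)))
      set m := b * Real.log ((1 - 0) / M) with hmdef
      set G := gp (M / b) b m (0 * (b / (1 - 0))) with hGdef
      have hpt : 0 ≤ ∫ t in Ioi (0:ℝ), (t ^ q * f t - t ^ q * G t) - m ^ q * (f t - G t) := by
        refine setIntegral_nonneg measurableSet_Ioi (fun t ht => ?_)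
        have ht : 0 < t := ht
        rw [show (t ^ q * f t - t ^ q * G t) - m ^ q * (f t - G t) = (t ^ q - m ^ q) * (f t - G t) by
          ring]
        rcases le_or_gt t m with h1 | h1
        · have h2 : G t = M / b * Real.exp (b⁻¹ * t) := by rw [hGdef]; unfold gp; rw [if_pos h1]
          refine mul_nonneg_of_nonpos_of_nonpos ?_ ?_
          · exact sub_nonpos.2 (Real.rpow_le_rpow ht.le h1 hq.le)
          · rw [h2]; exact sub_nonpos.2 (hB t ht.le)
        · have h2 : G t = 0 := by
            rw [hGdef]; unfold gp; rw [if_neg (not_le.2 h1), if_pos (by simp)]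
          refine mul_nonneg ?_ ?_
          · exact sub_nonneg.2 (Real.rpow_le_rpow hm h1.le hq.le)
          · rw [h2, sub_zero]; exact h.nn t
      have j1 : IntegrableOn (fun t => t ^ q * f t - t ^ q * G t) (Ioi 0) := iNq.sub A
      have j2 : IntegrableOn (fun t => m ^ q * (f t - G t)) (Ioi 0) := (iN0.sub A0).const_mul _
      rw [integral_sub j1 j2, integral_sub iNq A,
        integral_const_mul, integral_sub iN0 A0, eN, B0, sub_self, mul_zero, sub_zero] at hpt
      linarith
    · -- upper end
      show _ ≤ D q (b * Real.log ((1 - (1 - M)) / M)) (b / (1 - (1 - M))) (1 - M)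
      rw [sub_sub_cancel, div_self hM.ne', Real.log_one, mul_zero, ← hMN]
      unfold D
      rw [show 1 - N = M by linarith, neg_zero, mul_div_cancel₀ b hM.ne']
      have k1 := K_hom (s := q) hg.le 0 1
      have k2 := K_hom (s := q) (c := N * (b / M)) (by positivity) 0 1
      rw [mul_zero, mul_one] at k1 k2
      rw [k1, k2]
      have h1 : g ≤ N * (b / M) := by rw [← mul_div_assoc, le_div_iff₀ hM]; exact hle
      have h2 := Real.rpow_le_rpow hg.le h1 hq.le
      have := K_nonneg q 0 1
      gcongr
  have h1w : 0 < 1 - w := by linarith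
  obtain ⟨A0, B0⟩ := mass w hw hw1
  obtain ⟨Aq, Bq⟩ := gp_D (s := q) hq.le hb hM hw hw1
  obtain ⟨Ap, Bp⟩ := gp_D (s := p) hp.le hb hM hw hw1
  have hm : 0 ≤ b * Real.log ((1 - w) / M) :=
    mul_nonneg hb.le (Real.log_nonneg ((one_le_div hM).2 (by linarith)))
  have hσ : 0 < b / (1 - w) := by positivity
  refine ⟨b * Real.log ((1 - w) / M), b / (1 - w), w, hσ.le, hw, by linarith, Or.inr hσ.ne', ?_, ?_⟩
  · rw [split_s h.iq, qN, qM, hwe]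
  · rw [split_s h.ip, ← Bp]
    rw [hwe] at Bq
    generalize b * Real.log ((1 - w) / M) = m at *
    set α := w * (b / (1 - w)) with hα
    obtain ⟨G, hG⟩ : ∃ G, G = gp (M / b) b m α := ⟨_, rfl⟩
    rw [← hG] at A0 B0 Aq Bq Ap Bp ⊢
    have ee : ∀ s : ℝ, (fun t => t ^ s * (f t - G t)) = fun t => t ^ s * f t - t ^ s * G t := by
      intro s; funext t; ring
    -- the tail form
    obtain ⟨B', c, hB', hGt⟩ : ∃ B' c : ℝ, 0 ≤ B' ∧ ∀ t, m < t → G t = B' * Real.exp (c * t) := by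
      by_cases h0 : α = 0
      · refine ⟨0, 0, le_rfl, fun t ht => ?_⟩
        rw [hG]; unfold gp; rw [if_neg (not_le.2 ht), if_pos h0, zero_mul]
      · refine ⟨M / b * Real.exp (b⁻¹ * m) * Real.exp (α⁻¹ * m), -α⁻¹, by positivity, fun t ht => ?_⟩
        rw [hG]; unfold gp; rw [if_neg (not_le.2 ht), if_neg h0]
    have hgt : ∀ t, 0 < t → G t < f t → m < t := by
      intro t ht h1
      by_contra h2
      rw [not_lt] at h2
      rw [hG] at h1; unfold gp at h1; rw [if_pos h2] at h1
      linarith [hB t ht.le]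
    have := halfline hq hpq (φ := fun t => f t - G t) (iN0.sub A0) (by rw [ee]; exact iNq.sub Aq)
      (by rw [ee]; exact iNp.sub Ap) (by rw [integral_sub iN0 A0, eN, B0, sub_self])
      (by rw [ee, integral_sub iNq Aq, qN]; linarith) (by
        refine ⟨fun x hx y hy z hz => ?_⟩
        have hx2 := sub_pos.1 hx.2
        have hy2 := sub_pos.1 hy.2
        have hz0 : 0 < z := hx.1.trans_le hz.1
        refine ⟨hz0, sub_pos.2 ?_⟩
        rcases hz.1.eq_or_lt with h' | h'
        · rw [← h']; exact hx2
        rcases hz.2.eq_or_lt with h'' | h''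
        · rw [h'']; exact hy2
        have mx := hgt x hx.1 hx2
        have my := hgt y hy.1 hy2
        rw [hGt _ mx] at hx2
        rw [hGt _ my] at hy2
        rw [hGt _ (mx.trans h')]
        exact lc_between h.nn h.lc hB' (lt_of_le_of_lt (by positivity) hx2) hx2.le hy2 h' h'')
    rw [ee, integral_sub iNp Ap] at this
    linarith

lemma stage_zero {p q : ℝ} {f : ℝ → ℝ} (hq : 0 < q) (hpq : q < p) (h : Ok p q f)
    (eM : ∫ t in Ioi (0:ℝ), f (-t) = 0) : Good p q f := by
  have hn := h.neg
  have eN : ∫ t in Ioi (0:ℝ), f t = 1 := by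
    have := split h.i0
    rw [h.one, eM] at this; linarith
  have iN0 : IntegrableOn f (Ioi 0) := h.i0.integrableOn
  have iNq := half_int h.iq
  have iNp := half_int h.ip
  have z : ∀ s : ℝ, ∫ t in Ioi (0:ℝ), t ^ s * f (-t) = 0 := fun s =>
    half_zero_mom (F := fun t => f (-t)) hn.nn hn.i0.integrableOn eM
  have pos := half_pos_mom h.nn iN0 iNq (by rw [eN]; exact one_pos)
  obtain ⟨b, hb, hbe⟩ := exists_match hq one_pos pos
  have := match_le hq hpq h.nn h.lc iN0 iNq iNp one_pos hb eN hbe.symm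
  have e : ∀ s, D s 0 b 1 = 1 * K s 0 b := by intro s; unfold D; simp
  refine ⟨0, b, 1, hb.le, zero_le_one, le_rfl, Or.inr hb.ne', ?_, ?_⟩
  · rw [split_s h.iq, z, e, hbe, add_zero]
  · rw [split_s h.ip, z, e, add_zero]; exact this

lemma stage {p q : ℝ} {f : ℝ → ℝ} (hq : 0 < q) (hpq : q < p) (h : Ok p q f) : Good p q f := by
  have hn := h.neg
  have n1 : 0 ≤ ∫ t in Ioi (0:ℝ), f (-t) := integral_nonneg (fun t => hn.nn t)
  have n2 : 0 ≤ ∫ t in Ioi (0:ℝ), f t := integral_nonneg (fun t => h.nn t)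
  rcases n1.eq_or_lt with h1 | h1
  · exact stage_zero hq hpq h h1.symm
  rcases n2.eq_or_lt with h2 | h2
  · exact Good.of_neg (stage_zero hq hpq hn (by simpa using h2.symm))
  obtain ⟨b, hb, hbe⟩ := exists_match hq h1
    (half_pos_mom (s := q) hn.nn hn.i0.integrableOn (half_int hn.iq) h1)
  obtain ⟨g, hg, hge⟩ := exists_match hq h2
    (half_pos_mom (s := q) h.nn h.i0.integrableOn (half_int h.iq) h2)
  rcases le_total (g * ∫ t in Ioi (0:ℝ), f (-t)) ((∫ t in Ioi (0:ℝ), f t) * b) with h3 | h3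
  · exact stage_main hq hpq h h1 h2 hb hg rfl rfl hbe.symm hge.symm h3
  · refine Good.of_neg (stage_main hq hpq hn h2 h1 hg hb (by simp) rfl ?_ hbe.symm ?_)
    · simpa using hge.symm
    · linarith



lemma lc_meas {f : ℝ → ℝ} (nn : ∀ x, 0 ≤ f x)
    (lc : ∀ x y l : ℝ, 0 ≤ l → l ≤ 1 → f x ^ l * f y ^ (1 - l) ≤ f (l * x + (1 - l) * y)) :
    Measurable f := by
  refine measurable_of_Ioi (fun c => ?_)
  rcases lt_or_ge c 0 with hc | hc
  · rw [show f ⁻¹' Ioi c = univ from eq_univ_of_forall (fun x => hc.trans_le (nn x))]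
    exact MeasurableSet.univ
  refine OrdConnected.measurableSet ⟨fun x hx y hy z hz => ?_⟩
  have hx : c < f x := hx
  have hy : c < f y := hy
  rcases hz.1.eq_or_lt with h | h
  · rw [← h]; exact hx
  rcases hz.2.eq_or_lt with h' | h'
  · rw [h']; exact hy
  have := lc_between nn lc (c := 0) hc (lt_of_le_of_lt hc hx) (by simpa using hx.le)
    (by simpa using hy) h h'
  simpa using this

lemma wd_int {f : ℝ → ℝ} (nn : ∀ x, 0 ≤ f x) (hf : Measurable f) (s : ℝ) :
    (Integrable (fun x => |x| ^ s) (volume.withDensity (fun x => ENNReal.ofReal (f x))) ↔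
      Integrable (fun x => |x| ^ s * f x)) ∧
    ∫ x, |x| ^ s ∂(volume.withDensity (fun x => ENNReal.ofReal (f x))) = ∫ x, |x| ^ s * f x := by
  have e : (fun x => (ENNReal.ofReal (f x)).toReal • |x| ^ s) = fun x => |x| ^ s * f x := by
    funext x
    rw [ENNReal.toReal_ofReal (nn x), smul_eq_mul, mul_comm]
  constructor
  · rw [integrable_withDensity_iff_integrable_smul' hf.ennreal_ofReal (by simp), e]
  · rw [integral_withDensity_eq_integral_toReal_smul hf.ennreal_ofReal (by simp), e]

lemma wd_mass {f : ℝ → ℝ} (nn : ∀ x, 0 ≤ f x) (hf : Measurable f)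
    (h : IsProbabilityMeasure (volume.withDensity (fun x => ENNReal.ofReal (f x)))) :
    Integrable f ∧ ∫ x, f x = 1 := by
  have h1 := h.measure_univ
  rw [withDensity_apply _ MeasurableSet.univ, Measure.restrict_univ] at h1
  have e := integral_eq_lintegral_of_nonneg_ae (μ := volume) (ae_of_all _ nn)
    hf.aestronglyMeasurable
  rw [h1, ENNReal.toReal_one] at e
  refine ⟨?_, e⟩
  by_contra hn
  rw [integral_undef hn] at e
  exact zero_ne_one e

noncomputable def ed (a : ℝ) : ℝ → ℝ := indicator (Ioi a) (fun x => Real.exp (-(x - a)))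

lemma ed_nn (a x : ℝ) : 0 ≤ ed a x := indicator_nonneg (fun _ _ => (Real.exp_pos _).le) _

lemma ed_meas (a : ℝ) : Measurable (ed a) :=
  (by fun_prop : Measurable fun x : ℝ => Real.exp (-(x - a))).indicator measurableSet_Ioi

lemma ed_lc (a x y l : ℝ) (h0 : 0 ≤ l) (h1 : l ≤ 1) :
    ed a x ^ l * ed a y ^ (1 - l) ≤ ed a (l * x + (1 - l) * y) := by
  rcases h0.eq_or_lt with h | h0
  · rw [← h]; simp
  rcases h1.eq_or_lt with h | h1
  · rw [h]; simp
  have h2 : 0 < 1 - l := by linarith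
  by_cases hx : a < x
  · by_cases hy : a < y
    · have hz : a < l * x + (1 - l) * y := by nlinarith
      unfold ed
      rw [indicator_of_mem (mem_Ioi.2 hx), indicator_of_mem (mem_Ioi.2 hy),
        indicator_of_mem (mem_Ioi.2 hz), ← Real.exp_mul, ← Real.exp_mul, ← Real.exp_add]
      apply le_of_eq; congr 1; ring
    · have : ed a y = 0 := indicator_of_notMem (by simpa using hy) _
      rw [this, Real.zero_rpow h2.ne', mul_zero]; exact ed_nn _ _
  · have : ed a x = 0 := indicator_of_notMem (by simpa using hx) _
    rw [this, Real.zero_rpow h0.ne', zero_mul]; exact ed_nn _ _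

lemma ed_mom {s : ℝ} (hs : 0 ≤ s) (a : ℝ) :
    Integrable (fun x => |x| ^ s * ed a x) ∧ ∫ x, |x| ^ s * ed a x = K s a 1 := by
  have e : (fun x => |x| ^ s * ed a x) = indicator (Ioi a)
      (fun x => Real.exp (1 * a) * (Real.exp (-(1 * x)) * |x| ^ s)) := by
    funext x
    unfold ed
    by_cases hx : x ∈ Ioi a
    · rw [indicator_of_mem hx, indicator_of_mem hx, ← mul_assoc, ← Real.exp_add, mul_comm]
      congr 2; ring
    · rw [indicator_of_notMem hx, indicator_of_notMem hx, mul_zero]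
  rw [e]
  constructor
  · rw [integrable_indicator_iff measurableSet_Ioi]
    exact (T_int hs one_pos a).const_mul _
  · rw [integral_indicator measurableSet_Ioi, integral_const_mul, ← L_shift, L_eq one_pos]
    simp

lemma ed_prob (a : ℝ) :
    IsProbabilityMeasure (volume.withDensity (fun x => ENNReal.ofReal (ed a x))) := by
  obtain ⟨h1, h2⟩ := ed_mom le_rfl a (s := 0)
  simp only [Real.rpow_zero, one_mul] at h1 h2
  rw [K_zero] at h2
  constructor
  rw [withDensity_apply _ MeasurableSet.univ, Measure.restrict_univ,
    ← ofReal_integral_eq_lintegral_ofReal h1 (ae_of_all _ (ed_nn a)), h2, ENNReal.ofReal_one]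

lemma expAdd_eq (s a : ℝ) : expAddNorm s a = K s a 1 ^ (1 / s) := by
  unfold expAddNorm K; simp only [one_mul]

end SR

open SR in
/-- In the class of all log-concave real random variables `X` with
`0 < ‖X‖_q < ∞`, for `p > q > 0` the supremum of `‖X‖_p / ‖X‖_q` is attained
for a shifted exponential distribution `E + a`. -/
theorem sup_ratio_eq_shifted_exponential (p q : ℝ) (hq : 0 < q) (hpq : q < p) :
    ∃ a : ℝ,
      sSup {r : ℝ | ∃ μ : Measure ℝ, IsLogConcave μ ∧
          Integrable (fun x => |x| ^ q) μ ∧ 0 < momNorm μ q ∧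
          r = momNorm μ p / momNorm μ q} =
        expAddNorm p a / expAddNorm q a := by
  have hp : 0 < p := hq.trans hpq
  obtain ⟨a, ha⟩ := exists_shift hq hpq
  refine ⟨a, IsGreatest.csSup_eq ⟨?_, ?_⟩⟩
  · have hn : ∀ s, 0 < s → momNorm (volume.withDensity (fun x => ENNReal.ofReal (ed a x))) s =
        expAddNorm s a := by
      intro s hs
      rw [expAdd_eq]
      unfold momNorm
      rw [(wd_int (ed_nn a) (ed_meas a) s).2, (ed_mom hs.le a).2]
    refine ⟨volume.withDensity (fun x => ENNReal.ofReal (ed a x)),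
      ⟨ed_prob a, Or.inr ⟨ed a, ed_nn a, rfl, ed_lc a⟩⟩,
      (wd_int (ed_nn a) (ed_meas a) q).1.2 (ed_mom hq.le a).1, ?_, ?_⟩
    · rw [hn q hq, expAdd_eq]
      exact Real.rpow_pos_of_pos (K_pos hq.le (by simp)) _
    · rw [hn q hq, hn p hp]
  · rintro r ⟨μ, ⟨hpr, hμ⟩, hinteg, hpos, rfl⟩
    rw [expAdd_eq, expAdd_eq]
    rcases hμ with ⟨c, rfl⟩ | ⟨f, nn, rfl, lc⟩
    · have hm : ∀ s, momNorm (Measure.dirac c) s = (|c| ^ s) ^ (1 / s) := by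
        intro s; unfold momNorm; rw [integral_dirac]
      have hc : c ≠ 0 := by
        rintro rfl
        rw [hm, abs_zero, Real.zero_rpow hq.ne', Real.zero_rpow (by positivity)] at hpos
        exact lt_irrefl _ hpos
      have := ha c 0 1 le_rfl zero_le_one le_rfl (Or.inl hc)
      unfold Rt D at this
      simp only [mul_zero, K_zero_right, sub_self, zero_mul, add_zero, one_mul] at this
      rw [hm, hm]; exact this
    · have hf := lc_meas nn lc
      obtain ⟨i0, one⟩ := wd_mass nn hf hpr
      have hm : ∀ s, momNorm (volume.withDensity (fun x => ENNReal.ofReal (f x))) s =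
          (∫ x, |x| ^ s * f x) ^ (1 / s) := by
        intro s; unfold momNorm; rw [(wd_int nn hf s).2]
      rw [hm, hm]
      have iq := (wd_int nn hf q).1.1 hinteg
      by_cases ip : Integrable (fun x => |x| ^ p * f x)
      · obtain ⟨m, σ, w, hσ, hw, hw1, hne, e1, e2⟩ := stage hq hpq ⟨nn, lc, i0, iq, ip, one⟩
        refine le_trans ?_ (ha m σ w hσ hw hw1 hne)
        unfold Rt
        rw [e1]
        have h1 : 0 ≤ ∫ x, |x| ^ p * f x :=
          integral_nonneg (fun x => mul_nonneg (by positivity) (nn x))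
        have h2 : 0 ≤ D q m σ w ^ (1 / q) := Real.rpow_nonneg (D_nonneg hw hw1) _
        exact div_le_div_of_nonneg_right (Real.rpow_le_rpow h1 e2 (by positivity)) h2
      · rw [integral_undef ip, Real.zero_rpow (by positivity), zero_div]
        have := K_nonneg p a 1
        have := K_nonneg q a 1
        positivity
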